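/- Let X = (X₁,…,Xₙ) follow the general Curie–Weiss model CW(ρ) at β=1, where ρ is symmetric with support in [−L,L], ∫x²dρ=1, h(s)=s²/2−log∫e^{sx}dρ has s=0 as unique root of h'=0, and k≥2 satisfies h^{(i)}(0)=0 for 0≤i≤2k−1, h^{(2k)}(0)>0. Set G(w)=h^{(2k)}(0)·w^{2k}/(2k)!, W = n^{−1+1/(2k)}·(X₁+⋯+Xₙ), and for s>0 define ζ(W,s) = e^{G(W)−G(W−s)} if W>s, e^{G(W)} if 0≤W≤s, and 1 if W<0; let F^{(i)} = σ(X_j : j≠i). Suppose conditions (2.8), (2.9), (r2.2-a), (r2.2-b) of the paper hold (E(K̂₁|W) ≤ d₀; δ|g(W)| ≤ d₁; |R(W)| ≤ α(|g(W)|+1)+d₂·I(|W|>κ) with 0≤α<1; d₂·P(|W|>κ) ≤ d₃·e^{−2s₀/(d₁δ)} with s₀ = max{s : δ·s·g(s)² ≤ 1}, for the exchangeable-pair Stein identity associated with W). Then there is a constant C > 0 depending only on ρ such that E( | (1/n)·Σ_{i=1}^n ( Xᵢ² − E(Xᵢ²|F^{(i)}) ) |·ζ(W,s) ) ≤ C·n^{−1/k}·(1+|s|²)·E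 ζ(W,s). -/

import Mathlib

open MeasureTheory Real

/-- The Gibbs measure of the general Curie–Weiss model `CW(ρ)` at inverse
temperature `β = 1`. -/
noncomputable def cwMeasure (ρ : Measure ℝ) [IsProbabilityMeasure ρ] (n : ℕ) :
    Measure (Fin n → ℝ) :=
  (Measure.pi fun _ : Fin n => ρ).withDensity fun x =>
    ENNReal.ofReal (Real.exp ((∑ i, x i) ^ 2 / (2 * n)) /
      ∫ y : Fin n → ℝ, Real.exp ((∑ i, y i) ^ 2 / (2 * n))
        ∂(Measure.pi fun _ : Fin n => ρ))

/-- `h(s) = s²/2 − log ∫ e^{sx} dρ(x)`. -/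
noncomputable def hfun (ρ : Measure ℝ) (s : ℝ) : ℝ :=
  s ^ 2 / 2 - Real.log (∫ x, Real.exp (s * x) ∂ρ)

/-- `G(w) = h^{(2k)}(0) w^{2k} / (2k)!`. -/
noncomputable def cwG (ρ : Measure ℝ) (k : ℕ) (w : ℝ) : ℝ :=
  iteratedDeriv (2 * k) (hfun ρ) 0 * w ^ (2 * k) / Nat.factorial (2 * k)

/-- `g(w) = h^{(2k)}(0) w^{2k−1} / (2k−1)!`. -/
noncomputable def cwg (ρ : Measure ℝ) (k : ℕ) (w : ℝ) : ℝ :=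
  iteratedDeriv (2 * k) (hfun ρ) 0 * w ^ (2 * k - 1) / Nat.factorial (2 * k - 1)

/-- `W = n^{−1+1/(2k)} (X₁ + ⋯ + Xₙ)`. -/
noncomputable def cwW (n k : ℕ) (x : Fin n → ℝ) : ℝ :=
  (n : ℝ) ^ (-(1 : ℝ) + 1 / (2 * (k : ℝ))) * ∑ i, x i

/-- `ζ(w, s)`: `e^{G(w)−G(w−s)}` for `w > s`, `e^{G(w)}` for `0 ≤ w ≤ s`, `1` for `w < 0`. -/
noncomputable def zeta (G : ℝ → ℝ) (s w : ℝ) : ℝ :=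
  if w < 0 then 1 else if w ≤ s then Real.exp (G w) else Real.exp (G w - G (w - s))

/-- The σ-algebra `F⁽ⁱ⁾ = σ(X_j, j ≠ i)`. -/
noncomputable def Fi (n : ℕ) (i : Fin n) : MeasurableSpace (Fin n → ℝ) :=
  MeasurableSpace.comap (fun x => Function.update x i 0) inferInstance

/-- The general Stein identity (2.1). -/
def SteinIdentity {Ω : Type} [MeasurableSpace Ω] (μ : Measure Ω)
    (W R : Ω → ℝ) (Khat : Ω → ℝ → ℝ) (g : ℝ → ℝ) (δ : ℝ) : Prop :=
  ∀ f : ℝ → ℝ, Differentiable ℝ f →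
    Integrable (fun ω => f (W ω) * g (W ω)) μ →
    Integrable (fun ω => ∫ t in (-δ)..δ, deriv f (W ω + t) * Khat ω t) μ →
    Integrable (fun ω => f (W ω) * R ω) μ →
    ∫ ω, f (W ω) * g (W ω) ∂μ
      = (∫ ω, (∫ t in (-δ)..δ, deriv f (W ω + t) * Khat ω t) ∂μ)
        + ∫ ω, f (W ω) * R ω ∂μ

/-- `K̂₁ = ∫_{|t|≤δ} K̂(t) dt`. -/
noncomputable def KhatOne {Ω : Type} (Khat : Ω → ℝ → ℝ) (δ : ℝ) (ω : Ω) : ℝ :=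
  ∫ t in (-δ)..δ, Khat ω t


section Aux

lemma aux_integrable_of_compact {X : Type*} [TopologicalSpace X] [MeasurableSpace X]
    [OpensMeasurableSpace X] [T2Space X]
    {μ : Measure X} [IsFiniteMeasure μ] {K : Set X} (hK : IsCompact K)
    (hμ : ∀ᵐ x ∂μ, x ∈ K) {f : X → ℝ} (hf : Continuous f) : Integrable f μ := by
  have h1 : IntegrableOn f K μ :=
    hf.continuousOn.integrableOn_compact' hK hK.measurableSet
  have h2 : μ.restrict K = μ := Measure.restrict_eq_self_of_ae_mem hμ
  rwa [IntegrableOn, h2] at h1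

lemma aux_ae_bdd {ρ : Measure ℝ} [IsProbabilityMeasure ρ] {L : ℝ}
    (hL : ρ (Set.Icc (-L) L) = 1) : ∀ᵐ x ∂ρ, |x| ≤ L := by
  have := (prob_compl_eq_zero_iff (μ := ρ) (measurableSet_Icc (a := -L) (b := L))).2 hL
  have h2 : ∀ᵐ x ∂ρ, x ∈ Set.Icc (-L) L := this
  filter_upwards [h2] with x hx
  exact abs_le.2 hx

lemma aux_L_ge {ρ : Measure ℝ} [IsProbabilityMeasure ρ] {L : ℝ}
    (hb : ∀ᵐ x ∂ρ, |x| ≤ L) (hvar : (∫ x, x ^ 2 ∂ρ) = 1) : 1 ≤ L := by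
  have h0 : 0 ≤ L := by
    obtain ⟨x, hx⟩ := hb.exists
    exact (abs_nonneg x).trans hx
  have h1 : (∫ x, x ^ 2 ∂ρ) ≤ ∫ x, L ^ 2 ∂ρ := by
    apply integral_mono_of_nonneg
    · exact Filter.Eventually.of_forall fun x => sq_nonneg x
    · exact integrable_const _
    · filter_upwards [hb] with x hx
      exact sq_le_sq' (by linarith [abs_le.1 hx]) (abs_le.1 hx).2
  simp at h1
  nlinarith

lemma aux_int1 {ρ : Measure ℝ} [IsProbabilityMeasure ρ] {L : ℝ}
    (hb : ∀ᵐ x ∂ρ, |x| ≤ L) {f : ℝ → ℝ} (hf : Continuous f) : Integrable f ρ :=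
  aux_integrable_of_compact (isCompact_Icc (a := -L) (b := L))
    (by filter_upwards [hb] with x hx using abs_le.1 hx) hf

lemma aux_pi_bdd {ρ : Measure ℝ} [IsProbabilityMeasure ρ] {L : ℝ}
    (hb : ∀ᵐ x ∂ρ, |x| ≤ L) (n : ℕ) :
    ∀ᵐ x ∂(Measure.pi fun _ : Fin n => ρ), ∀ i, |x i| ≤ L := by
  rw [ae_all_iff]
  intro i
  exact (Measure.tendsto_eval_ae_ae (μ := fun _ : Fin n => ρ) (i := i)).eventually hb

lemma aux_intn {ρ : Measure ℝ} [IsProbabilityMeasure ρ] {L : ℝ}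
    (hb : ∀ᵐ x ∂ρ, |x| ≤ L) {n : ℕ} {f : (Fin n → ℝ) → ℝ} (hf : Continuous f) :
    Integrable f (Measure.pi fun _ : Fin n => ρ) :=
  aux_integrable_of_compact
    (isCompact_univ_pi (fun _ : Fin n => isCompact_Icc (a := -L) (b := L)))
    (by filter_upwards [aux_pi_bdd hb n] with x hx
        intro i _
        exact abs_le.1 (hx i)) hf

lemma aux_intnv {ρ : Measure ℝ} [IsProbabilityMeasure ρ] {L : ℝ}
    (hb : ∀ᵐ x ∂ρ, |x| ≤ L) {n : ℕ} {f : (Fin n → ℝ) × ℝ → ℝ} (hf : Continuous f) :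
    Integrable f ((Measure.pi fun _ : Fin n => ρ).prod (volume.restrict (Set.Icc (-L) L))) := by
  refine aux_integrable_of_compact
    ((isCompact_univ_pi (fun _ : Fin n => isCompact_Icc (a := -L) (b := L))).prod
      (isCompact_Icc (a := -L) (b := L))) ?_ hf
  have h1 : ∀ᵐ p ∂((Measure.pi fun _ : Fin n => ρ).prod (volume.restrict (Set.Icc (-L) L))),
      ∀ i, |p.1 i| ≤ L :=
    Measure.quasiMeasurePreserving_fst.ae (aux_pi_bdd hb n)
  have h2 : ∀ᵐ p ∂((Measure.pi fun _ : Fin n => ρ).prod (volume.restrict (Set.Icc (-L) L))),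
      p.2 ∈ Set.Icc (-L) L :=
    Measure.quasiMeasurePreserving_snd.ae (ae_restrict_mem measurableSet_Icc)
  filter_upwards [h1, h2] with p hp1 hp2
  exact ⟨fun i _ => abs_le.1 (hp1 i), hp2⟩

lemma aux_odd {ρ : Measure ℝ} (hsym : ρ.map (fun x => -x) = ρ) {f : ℝ → ℝ}
    (hf : Continuous f) (hodd : ∀ x, f (-x) = - f x) : ∫ x, f x ∂ρ = 0 := by
  have h : ∫ x, f x ∂ρ = ∫ x, f (-x) ∂ρ := by
    conv_lhs => rw [← hsym]
    rw [integral_map (by fun_prop) hf.aestronglyMeasurable]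
  simp_rw [hodd, integral_neg] at h
  linarith

lemma aux_exp1 (z : ℝ) : |Real.exp z - 1 - z| ≤ z ^ 2 * Real.exp |z| := by
  have h := Complex.norm_exp_sub_sum_le_norm_mul_exp (z : ℂ) 2
  simp only [Finset.sum_range_succ, Finset.sum_range_zero] at h
  have e : (Complex.exp z - (0 + (z:ℂ) ^ 0 / (Nat.factorial 0 : ℕ) + (z:ℂ) ^ 1 / (Nat.factorial 1 : ℕ)))
      = ((Real.exp z - 1 - z : ℝ) : ℂ) := by
    push_cast; simp; ring
  rw [e, Complex.norm_real, Complex.norm_real] at h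
  simpa [Real.norm_eq_abs, sq_abs] using h

lemma aux_exp0 (z : ℝ) : |Real.exp z - 1| ≤ |z| * Real.exp |z| := by
  have h := Complex.norm_exp_sub_sum_le_norm_mul_exp (z : ℂ) 1
  simp only [Finset.sum_range_succ, Finset.sum_range_zero] at h
  have e : (Complex.exp z - (0 + (z:ℂ) ^ 0 / (Nat.factorial 0 : ℕ)))
      = ((Real.exp z - 1 : ℝ) : ℂ) := by
    push_cast; simp
  rw [e, Complex.norm_real, Complex.norm_real] at h
  simpa [Real.norm_eq_abs, sq_abs] using h

/-- key one-site estimate -/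
lemma aux_site {ρ : Measure ℝ} [IsProbabilityMeasure ρ] {L : ℝ}
    (hb : ∀ᵐ x ∂ρ, |x| ≤ L) (hsym : ρ.map (fun x => -x) = ρ)
    (hvar : (∫ x, x ^ 2 ∂ρ) = 1) (T : ℝ) :
    ∃ C : ℝ, 0 < C ∧ ∀ q m : ℝ, 0 ≤ q → q ≤ 1 → |m| ≤ T →
      |∫ x, (x ^ 2 - 1) * Real.exp (q * x ^ 2 + m * x) ∂ρ| ≤ C * (q + m ^ 2) := by
  have hL := aux_L_ge hb hvar
  set E := Real.exp (L ^ 2 + T * L) with hE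
  have hEpos : 0 < E := Real.exp_pos _
  refine ⟨L ^ 2 * L ^ 2 + L ^ 2 * (2 * L ^ 4 * E) , by positivity, ?_⟩
  intro q m hq0 hq1 hm
  have hT : 0 ≤ T := (abs_nonneg m).trans hm
  have h1 : ∫ x, (x ^ 2 - 1) * Real.exp (q * x ^ 2 + m * x) ∂ρ
      = ∫ x, ((x ^ 2 - 1) * (Real.exp (q * x ^ 2 + m * x) - 1 - (q * x ^ 2 + m * x))
          + (x ^ 2 - 1) * (q * x ^ 2)) ∂ρ := by
    have e1 : ∀ x : ℝ, (x ^ 2 - 1) * Real.exp (q * x ^ 2 + m * x) =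
        ((x ^ 2 - 1) * (Real.exp (q * x ^ 2 + m * x) - 1 - (q * x ^ 2 + m * x))
          + (x ^ 2 - 1) * (q * x ^ 2)) + ((x ^ 2 - 1) + (x ^ 3 - x) * m) := by intro x; ring
    have e2 : ∫ x, ((x ^ 2 - 1) + (x ^ 3 - x) * m) ∂ρ = 0 := by
      rw [integral_add (aux_int1 hb (by fun_prop)) (aux_int1 hb (by fun_prop)),
        integral_sub (aux_int1 hb (by fun_prop)) (aux_int1 hb (by fun_prop)), hvar,
        aux_odd hsym (f := fun x => (x ^ 3 - x) * m) (by fun_prop) (by intro x; ring)]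
      simp
    simp_rw [e1]
    rw [integral_add (aux_int1 hb (by fun_prop)) (aux_int1 hb (by fun_prop)), e2, add_zero]
  rw [h1]
  have h2 : ∀ᵐ x ∂ρ, ‖(x ^ 2 - 1) * (Real.exp (q * x ^ 2 + m * x) - 1 - (q * x ^ 2 + m * x))
          + (x ^ 2 - 1) * (q * x ^ 2)‖ ≤ (L ^ 2 * L ^ 2 + L ^ 2 * (2 * L ^ 4 * E)) * (q + m ^ 2) := by
    filter_upwards [hb] with x hx
    have hx2 : x ^ 2 ≤ L ^ 2 := sq_le_sq' (by linarith [abs_le.1 hx]) (abs_le.1 hx).2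
    have hL2 : 1 ≤ L ^ 2 := by nlinarith
    have hx21 : |x ^ 2 - 1| ≤ L ^ 2 := by
      rw [abs_le]; constructor <;> nlinarith [sq_nonneg x]
    set z := q * x ^ 2 + m * x with hz
    have hzabs : |z| ≤ L ^ 2 + T * L := by
      rw [hz]
      calc |q * x ^ 2 + m * x| ≤ |q * x ^ 2| + |m * x| := abs_add_le _ _
        _ ≤ L ^ 2 + T * L := by
          rw [abs_mul m, abs_of_nonneg (by positivity : 0 ≤ q * x ^ 2)]
          have := mul_le_mul hm hx (abs_nonneg x) hT
          nlinarith [sq_nonneg x]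
    have hz2 : z ^ 2 ≤ 2 * L ^ 4 * (q + m ^ 2) := by
      have a1 : z ^ 2 ≤ 2 * (q * x ^ 2) ^ 2 + 2 * (m * x) ^ 2 := by
        rw [hz]; nlinarith [sq_nonneg (q * x ^ 2 - m * x)]
      have a2 : (q * x ^ 2) ^ 2 ≤ q * L ^ 4 := by
        have : q * x ^ 2 * (q * x ^ 2) ≤ q * L ^ 2 * (1 * L ^ 2) := by gcongr
        nlinarith
      have a3 : (m * x) ^ 2 ≤ m ^ 2 * L ^ 4 := by
        have : x ^ 2 ≤ L ^ 4 := by nlinarith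
        nlinarith [mul_le_mul_of_nonneg_left this (sq_nonneg m)]
      nlinarith
    have h3 := aux_exp1 z
    have h4 : Real.exp |z| ≤ E := Real.exp_le_exp.2 hzabs
    have h5 : |Real.exp z - 1 - z| ≤ 2 * L ^ 4 * (q + m ^ 2) * E :=
      h3.trans (mul_le_mul hz2 h4 (Real.exp_pos _).le (by positivity))
    rw [Real.norm_eq_abs]
    calc _ ≤ |(x ^ 2 - 1) * (Real.exp z - 1 - z)| + |(x ^ 2 - 1) * (q * x ^ 2)| := abs_add_le _ _
      _ ≤ L ^ 2 * (2 * L ^ 4 * (q + m ^ 2) * E) + L ^ 2 * (q * L ^ 2) := by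
        rw [abs_mul, abs_mul, abs_of_nonneg (by positivity : 0 ≤ q * x ^ 2)]
        gcongr
      _ ≤ _ := by nlinarith [mul_nonneg (by positivity : 0 ≤ L ^ 2 * L ^ 2) (sq_nonneg m)]
  have h6 := norm_integral_le_of_norm_le_const h2
  simpa using h6

lemma aux_site1 {ρ : Measure ℝ} [IsProbabilityMeasure ρ] {L : ℝ}
    (hb : ∀ᵐ x ∂ρ, |x| ≤ L) (hsym : ρ.map (fun x => -x) = ρ)
    (hL : 1 ≤ L) (T : ℝ) :
    ∃ C : ℝ, 0 < C ∧ ∀ m : ℝ, |m| ≤ T →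
      |∫ x, x * Real.exp (m * x) ∂ρ| ≤ C * |m| := by
  refine ⟨L ^ 2 * Real.exp (T * L), by positivity, ?_⟩
  intro m hm
  have hT : 0 ≤ T := (abs_nonneg m).trans hm
  have h1 : ∫ x, x * Real.exp (m * x) ∂ρ = ∫ x, x * (Real.exp (m * x) - 1) ∂ρ := by
    have e2 : ∫ x, x ∂ρ = 0 := aux_odd hsym (f := fun x => x) (by fun_prop) (by intro x; ring)
    have e1 : ∀ x : ℝ, x * Real.exp (m * x) = x * (Real.exp (m * x) - 1) + x := by intro x; ring
    simp_rw [e1]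
    rw [integral_add (aux_int1 hb (by fun_prop)) (aux_int1 hb (by fun_prop)), e2, add_zero]
  rw [h1]
  have h2 : ∀ᵐ x ∂ρ, ‖x * (Real.exp (m * x) - 1)‖ ≤ L ^ 2 * Real.exp (T * L) * |m| := by
    filter_upwards [hb] with x hx
    have h3 := aux_exp0 (m * x)
    have h4 : |m * x| ≤ T * L := by
      rw [abs_mul]; exact mul_le_mul hm hx (abs_nonneg x) hT
    have h5 : |Real.exp (m * x) - 1| ≤ (|m| * L) * Real.exp (T * L) := by
      refine h3.trans (mul_le_mul ?_ (Real.exp_le_exp.2 h4) (Real.exp_pos _).le (by positivity))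
      rw [abs_mul]; gcongr
    rw [Real.norm_eq_abs, abs_mul]
    calc _ ≤ L * ((|m| * L) * Real.exp (T * L)) := by gcongr
      _ = _ := by ring
  have h6 := norm_integral_le_of_norm_le_const h2
  simpa using h6

lemma aux_mgf_ge {ρ : Measure ℝ} [IsProbabilityMeasure ρ] {L : ℝ}
    (hb : ∀ᵐ x ∂ρ, |x| ≤ L) (hsym : ρ.map (fun x => -x) = ρ) (q m : ℝ) (hq : 0 ≤ q) :
    1 ≤ ∫ x, Real.exp (q * x ^ 2 + m * x) ∂ρ := by
  have e2 : ∫ x, x ∂ρ = 0 := aux_odd hsym (f := fun x => x) (by fun_prop) (by intro x; ring)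
  have : ∫ x, (1 + m * x) ∂ρ ≤ ∫ x, Real.exp (q * x ^ 2 + m * x) ∂ρ := by
    apply integral_mono (aux_int1 hb (by fun_prop)) (aux_int1 hb (by fun_prop))
    intro x
    have := Real.add_one_le_exp (q * x ^ 2 + m * x)
    have := mul_nonneg hq (sq_nonneg x)
    simp only
    linarith
  rw [integral_add (aux_int1 hb (by fun_prop)) (aux_int1 hb (by fun_prop)),
    integral_const_mul, e2] at this
  simpa using this

lemma aux_two {ρ : Measure ℝ} [IsProbabilityMeasure ρ] {n : ℕ} (f : ℝ → ℝ) (t : ℝ)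
    (hM : 1 ≤ ∫ x, Real.exp (t * x) ∂ρ) (i j : Fin n) (hij : i ≠ j) :
    ∫ x : Fin n → ℝ, f (x i) * f (x j) * Real.exp (t * ∑ l, x l) ∂(Measure.pi fun _ : Fin n => ρ)
      ≤ (∫ x, Real.exp (t * x) ∂ρ) ^ n * (∫ x, f x * Real.exp (t * x) ∂ρ) ^ 2 := by
  set M := ∫ x, Real.exp (t * x) ∂ρ with hMdef
  set I := ∫ x, f x * Real.exp (t * x) ∂ρ with hI
  have e : ∀ x : Fin n → ℝ, f (x i) * f (x j) * Real.exp (t * ∑ l, x l)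
      = ∏ l, (if l ∈ ({i, j} : Finset (Fin n)) then f (x l) else 1) * Real.exp (t * x l) := by
    intro x
    rw [Finset.prod_mul_distrib, Finset.mul_sum, Real.exp_sum, Finset.prod_ite_mem,
      Finset.univ_inter, Finset.prod_pair hij]
  simp_rw [e]
  rw [integral_fintype_prod_eq_prod (𝕜 := ℝ)
    (fun (l : Fin n) (y : ℝ) => (if l ∈ ({i, j} : Finset (Fin n)) then f y else 1) * Real.exp (t * y))]
  have e2 : ∀ l : Fin n, ∫ y, (if l ∈ ({i, j} : Finset (Fin n)) then f y else 1) * Real.exp (t * y) ∂ρ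
      = M * (if l ∈ ({i, j} : Finset (Fin n)) then I / M else 1) := by
    intro l
    split_ifs
    · field_simp; rfl
    · simp; rfl
  simp_rw [e2]
  rw [Finset.prod_mul_distrib, Finset.prod_ite_mem, Finset.univ_inter, Finset.prod_pair hij]
  simp only [Finset.prod_const, Finset.card_univ, Fintype.card_fin]
  have : I / M * (I / M) ≤ I ^ 2 := by
    rw [← sq, div_pow]
    apply div_le_self (sq_nonneg _)
    nlinarith
  gcongr

lemma aux_mgf_pow {ρ : Measure ℝ} [IsProbabilityMeasure ρ] {n : ℕ} (t : ℝ) :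
    ∫ x : Fin n → ℝ, Real.exp (t * ∑ l, x l) ∂(Measure.pi fun _ : Fin n => ρ)
      = (∫ x, Real.exp (t * x) ∂ρ) ^ n := by
  simp_rw [Finset.mul_sum, Real.exp_sum]
  rw [integral_fintype_prod_eq_prod (𝕜 := ℝ) (fun (_ : Fin n) (y : ℝ) => Real.exp (t * y))]
  simp

lemma aux_sum_sq {ρ : Measure ℝ} [IsProbabilityMeasure ρ] {L : ℝ}
    (hb : ∀ᵐ x ∂ρ, |x| ≤ L) {n : ℕ} (f : ℝ → ℝ) (hf : Continuous f) (b : ℝ)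
    (hfb : ∀ x, |x| ≤ L → f x ^ 2 ≤ b) (t : ℝ)
    (hM : 1 ≤ ∫ x, Real.exp (t * x) ∂ρ) :
    ∫ x : Fin n → ℝ, (∑ i, f (x i)) ^ 2 * Real.exp (t * ∑ l, x l)
        ∂(Measure.pi fun _ : Fin n => ρ)
      ≤ (∫ x, Real.exp (t * x) ∂ρ) ^ n *
        (n * b + n ^ 2 * (∫ x, f x * Real.exp (t * x) ∂ρ) ^ 2) := by
  set M := ∫ x, Real.exp (t * x) ∂ρ with hMdef
  set I := ∫ x, f x * Real.exp (t * x) ∂ρ with hI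
  have e : ∀ x : Fin n → ℝ, (∑ i, f (x i)) ^ 2 * Real.exp (t * ∑ l, x l)
      = ∑ i, ∑ j, f (x i) * f (x j) * Real.exp (t * ∑ l, x l) := by
    intro x
    rw [sq, Finset.sum_mul_sum, Finset.sum_mul]
    simp_rw [Finset.sum_mul]
  simp_rw [e]
  rw [integral_finsetSum _ (fun i _ => aux_intn hb (by fun_prop))]
  simp_rw [fun i : Fin n => integral_finsetSum (μ := Measure.pi fun _ : Fin n => ρ) Finset.univ
    (f := fun j (x : Fin n → ℝ) => f (x i) * f (x j) * Real.exp (t * ∑ l, x l))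
    (fun j _ => aux_intn hb (by fun_prop))]
  have hMn : 0 ≤ M ^ n := by positivity
  have key : ∀ i j : Fin n, ∫ x : Fin n → ℝ, f (x i) * f (x j) * Real.exp (t * ∑ l, x l)
      ∂(Measure.pi fun _ : Fin n => ρ) ≤ (if i = j then M ^ n * b else 0) + M ^ n * I ^ 2 := by
    intro i j
    split_ifs with h
    · subst h
      have : ∫ x : Fin n → ℝ, f (x i) * f (x i) * Real.exp (t * ∑ l, x l)
          ∂(Measure.pi fun _ : Fin n => ρ) ≤ ∫ x : Fin n → ℝ, b * Real.exp (t * ∑ l, x l)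
          ∂(Measure.pi fun _ : Fin n => ρ) := by
        apply integral_mono_ae (aux_intn hb (by fun_prop)) (aux_intn hb (by fun_prop))
        filter_upwards [aux_pi_bdd hb n] with x hx
        have := hfb _ (hx i)
        rw [← sq]
        gcongr
      rw [integral_const_mul, aux_mgf_pow] at this
      have h2 : 0 ≤ M ^ n * I ^ 2 := by positivity
      linarith
    · rw [zero_add]
      exact aux_two f t hM i j h
  refine (Finset.sum_le_sum fun i _ => Finset.sum_le_sum fun j _ => key i j).trans ?_
  simp only [Finset.sum_add_distrib, Finset.sum_ite_eq, Finset.mem_univ, if_true, Finset.sum_const,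
    Finset.card_univ, Fintype.card_fin, nsmul_eq_mul]
  apply le_of_eq
  ring

end Aux

section Aux2

lemma aux_h_contDiff {ρ : Measure ℝ} [IsProbabilityMeasure ρ] {L : ℝ}
    (hb : ∀ᵐ x ∂ρ, |x| ≤ L) : ∀ N : ℕ, ContDiff ℝ N (hfun ρ) := by
  intro N
  have h1 : ∀ t, AnalyticAt ℝ (ProbabilityTheory.cgf id ρ) t := by
    intro t
    apply ProbabilityTheory.analyticAt_cgf
    have : ProbabilityTheory.integrableExpSet id ρ = Set.univ := by
      ext s
      simp only [ProbabilityTheory.integrableExpSet, Set.mem_ofPred_eq, Set.mem_univ, iff_true, id]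
      exact aux_int1 hb (by fun_prop)
    simp [this]
  have h2 : hfun ρ = fun s => s ^ 2 / 2 - ProbabilityTheory.cgf id ρ s := by
    ext s
    simp [hfun, ProbabilityTheory.cgf, ProbabilityTheory.mgf]
  rw [h2, contDiff_iff_contDiffAt]
  intro t
  exact (by fun_prop : ContDiff ℝ N fun s : ℝ => s ^ 2 / 2).contDiffAt.sub (h1 t).contDiffAt

lemma aux_mgf_eq {ρ : Measure ℝ} (t : ℝ)
    (hM : 1 ≤ ∫ x, Real.exp (t * x) ∂ρ) :
    ∫ x, Real.exp (t * x) ∂ρ = Real.exp (t ^ 2 / 2 - hfun ρ t) := by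
  rw [hfun]
  have : t ^ 2 / 2 - (t ^ 2 / 2 - Real.log (∫ x, Real.exp (t * x) ∂ρ)) =
    Real.log (∫ x, Real.exp (t * x) ∂ρ) := by ring
  rw [this, Real.exp_log (by linarith)]

lemma aux_taylor {f : ℝ → ℝ} {N : ℕ}
    (hder : ∀ i : ℕ, i < N → iteratedDeriv i f 0 = 0) (x : ℝ) :
    taylorWithinEval f N Set.univ 0 x = iteratedDeriv N f 0 / Nat.factorial N * x ^ N := by
  rw [taylor_within_apply, Finset.sum_range_succ, Finset.sum_eq_zero]
  · simp [iteratedDerivWithin_univ]; ring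
  · intro i hi
    rw [iteratedDerivWithin_univ, hder i (Finset.mem_range.1 hi)]
    simp

lemma aux_h_bounds {h : ℝ → ℝ} (hc : ∀ N : ℕ, ContDiff ℝ N h) {k : ℕ} (hk : 1 ≤ k)
    (hroot : ∀ s : ℝ, deriv h s = 0 ↔ s = 0)
    (hder : ∀ i : ℕ, i ≤ 2 * k - 1 → iteratedDeriv i h 0 = 0)
    (hpos : 0 < iteratedDeriv (2 * k) h 0) (T : ℝ) :
    ∃ c C : ℝ, 0 < c ∧ 0 < C ∧ ∀ t, |t| ≤ T → c * t ^ (2 * k) ≤ h t ∧ h t ≤ C * t ^ (2 * k) := by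
  have hcont : Continuous h := (hc 0).continuous
  have h0 : h 0 = 0 := by simpa using hder 0 (by omega)
  set a := iteratedDeriv (2 * k) h 0 / Nat.factorial (2 * k) with ha
  have hapos : 0 < a := by positivity
  have ho := taylor_isLittleO_univ (x₀ := 0) (hc (2 * k))
  have ho2 := ho.bound (half_pos hapos)
  obtain ⟨η, hη, hball⟩ := Metric.eventually_nhds_iff.1 ho2
  have near : ∀ t, |t| < η → a / 2 * t ^ (2 * k) ≤ h t ∧ h t ≤ (2 * a) * t ^ (2 * k) := by
    intro t ht
    have h3 := hball (y := t) (by simpa using ht)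
    rw [aux_taylor (fun i hi => hder i (by omega)), ← ha] at h3
    have hp : 0 ≤ t ^ (2 * k) := by rw [pow_mul]; positivity
    simp only [sub_zero, Real.norm_eq_abs] at h3
    rw [abs_of_nonneg hp, abs_le] at h3
    constructor <;> nlinarith [h3.1, h3.2]
  have hposall : ∀ t, t ≠ 0 → 0 < h t := by
    intro t ht
    by_contra hneg
    push Not at hneg
    -- a point near zero in the segment
    have hpow : ∀ y : ℝ, y ≠ 0 → 0 < y ^ (2 * k) := by
      intro y hy; rw [pow_mul]; positivity
    rcases lt_or_gt_of_ne ht with hlt | hgt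
    · set y := max (-(η / 2)) (t) with hy
      have hy0 : y < 0 := by rw [hy]; simp; constructor <;> linarith
      have hyη : |y| < η := by rw [abs_of_neg hy0]; have := le_max_left (-(η/2)) t; linarith
      have hyp : 0 < h y := lt_of_lt_of_le (mul_pos (by positivity) (hpow y hy0.ne)) (near y hyη).1
      have hty : t ≤ y := le_max_right _ _
      obtain ⟨z, hz, hz0⟩ : (0:ℝ) ∈ Set.image h (Set.Icc t y) :=
        intermediate_value_Icc hty hcont.continuousOn ⟨hneg, hyp.le⟩
      have hz1 : z < 0 := lt_of_le_of_lt hz.2 hy0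
      obtain ⟨w, hw, hw0⟩ := exists_deriv_eq_zero hz1 hcont.continuousOn (by rw [hz0, h0])
      have := (hroot w).1 hw0
      linarith [hw.2]
    · set y := min ((η / 2)) (t) with hy
      have hy0 : 0 < y := by rw [hy]; simp; constructor <;> linarith
      have hyη : |y| < η := by rw [abs_of_pos hy0]; have := min_le_left (η/2) t; linarith
      have hyp : 0 < h y := lt_of_lt_of_le (mul_pos (by positivity) (hpow y hy0.ne')) (near y hyη).1
      have hty : y ≤ t := min_le_right _ _
      obtain ⟨z, hz, hz0⟩ : (0:ℝ) ∈ Set.image h (Set.Icc y t) :=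
        intermediate_value_Icc' hty hcont.continuousOn ⟨hneg, hyp.le⟩
      have hz1 : 0 < z := lt_of_lt_of_le hy0 hz.1
      obtain ⟨w, hw, hw0⟩ := exists_deriv_eq_zero hz1 hcont.continuousOn (by rw [hz0, h0])
      have := (hroot w).1 hw0
      linarith [hw.1]
  set S := {t : ℝ | η ≤ |t|} ∩ Set.Icc (-T) T with hS
  have hScomp : IsCompact S :=
    isCompact_Icc.inter_left (isClosed_le continuous_const continuous_abs)
  have hr : ContinuousOn (fun t => h t / t ^ (2 * k)) S := by
    apply hcont.continuousOn.div (by fun_prop)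
    intro t ht
    have : t ≠ 0 := by
      rintro rfl
      have := ht.1
      simp at this; linarith
    positivity
  rcases S.eq_empty_or_nonempty with hE | hne
  · refine ⟨a / 2, 2 * a, by positivity, by positivity, fun t ht => near t ?_⟩
    by_contra hcon
    have : t ∈ S := ⟨not_lt.1 hcon, abs_le.1 ht⟩
    rw [hE] at this
    exact this
  · obtain ⟨t1, ht1, hmin⟩ := hScomp.exists_isMinOn hne hr
    obtain ⟨t2, ht2, hmax⟩ := hScomp.exists_isMaxOn hne hr
    have hSne : ∀ t ∈ S, 0 < t ^ (2 * k) ∧ 0 < h t := by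
      intro t ht
      have : t ≠ 0 := by
        rintro rfl
        have := ht.1
        simp at this; linarith
      exact ⟨by rw [pow_mul]; positivity, hposall t this⟩
    refine ⟨min (a / 2) (h t1 / t1 ^ (2 * k)), max (2 * a) (h t2 / t2 ^ (2 * k)), ?_, ?_, ?_⟩
    · exact lt_min (by positivity) (div_pos (hSne t1 ht1).2 (hSne t1 ht1).1)
    · exact lt_of_lt_of_le (by positivity) (le_max_left _ _)
    · intro t ht
      have hp : 0 ≤ t ^ (2 * k) := by rw [pow_mul]; positivity
      by_cases hcase : |t| < η
      · have := near t hcase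
        exact ⟨(mul_le_mul_of_nonneg_right (min_le_left _ _) hp).trans this.1,
          this.2.trans (mul_le_mul_of_nonneg_right (le_max_left _ _) hp)⟩
      · have htS : t ∈ S := ⟨not_lt.1 hcase, abs_le.1 ht⟩
        have hp' := (hSne t htS).1
        have m1 : h t1 / t1 ^ (2 * k) ≤ h t / t ^ (2 * k) := hmin htS
        have m2 : h t / t ^ (2 * k) ≤ h t2 / t2 ^ (2 * k) := hmax htS
        rw [le_div_iff₀ hp'] at m1
        rw [div_le_iff₀ hp'] at m2
        exact ⟨(mul_le_mul_of_nonneg_right (min_le_right _ _) hp).trans m1,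
          m2.trans (mul_le_mul_of_nonneg_right (le_max_right _ _) hp)⟩

/-- positive-part power difference -/
noncomputable def ppd (σ : ℝ) (j : ℕ) (u : ℝ) : ℝ := (max u 0) ^ j - (max (u - σ) 0) ^ j

lemma ppd_continuous (σ : ℝ) (j : ℕ) : Continuous (ppd σ j) := by
  unfold ppd; fun_prop

lemma ppd_nonneg {σ : ℝ} (hσ : 0 ≤ σ) (j : ℕ) (u : ℝ) : 0 ≤ ppd σ j u := by
  unfold ppd
  have : max (u - σ) 0 ≤ max u 0 := max_le_max (by linarith) le_rfl
  have := pow_le_pow_left₀ (le_max_right _ _) this j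
  linarith

lemma ppd_le (σ : ℝ) (j : ℕ) (u : ℝ) : ppd σ j u ≤ |u| ^ j := by
  unfold ppd
  have h1 : max u 0 ≤ |u| := max_le (le_abs_self u) (abs_nonneg u)
  have := pow_le_pow_left₀ (le_max_right _ _) h1 j
  have : 0 ≤ (max (u - σ) 0) ^ j := pow_nonneg (le_max_right _ _) j
  linarith

lemma ppd_neg {σ : ℝ} (hσ : 0 ≤ σ) {j : ℕ} (hj : 1 ≤ j) {u : ℝ} (hu : u ≤ 0) :
    ppd σ j u = 0 := by
  unfold ppd
  rw [max_eq_right hu, max_eq_right (by linarith)]; simp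

lemma pp_hasDerivAt (j : ℕ) (hj : 1 ≤ j) (x : ℝ) :
    HasDerivAt (fun x : ℝ => (max x 0) ^ (j + 1)) ((j + 1 : ℝ) * (max x 0) ^ j) x := by
  rcases lt_trichotomy x 0 with hx | hx | hx
  · rw [max_eq_right hx.le, zero_pow (by omega), mul_zero]
    apply (hasDerivAt_const x (0:ℝ)).congr_of_eventuallyEq
    filter_upwards [Iio_mem_nhds hx] with y hy
    rw [max_eq_right (le_of_lt hy), zero_pow (by omega)]
  · subst hx
    rw [max_self, zero_pow (by omega), mul_zero, hasDerivAt_iff_isLittleO]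
    simp only [max_self, zero_pow (Nat.succ_ne_zero j), sub_zero, smul_zero]
    have h1 : (fun x : ℝ => (max x 0) ^ (j + 1)) =O[nhds 0] (fun x : ℝ => x ^ (j + 1)) := by
      apply Asymptotics.IsBigO.of_bound 1
      refine Filter.Eventually.of_forall fun x => ?_
      rw [norm_pow, norm_pow, one_mul]
      apply pow_le_pow_left₀ (norm_nonneg _)
      rw [Real.norm_eq_abs, Real.norm_eq_abs, abs_of_nonneg (le_max_right x 0)]
      exact max_le (le_abs_self x) (abs_nonneg x)
    exact h1.trans_isLittleO (Asymptotics.isLittleO_pow_id (by omega))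
  · rw [max_eq_left hx.le]
    have := hasDerivAt_pow (j + 1) x
    simp only [Nat.add_sub_cancel] at this
    push_cast at this
    apply this.congr_of_eventuallyEq
    filter_upwards [Ioi_mem_nhds hx] with y hy
    rw [max_eq_left (le_of_lt hy)]

lemma ppd_hasDerivAt (σ : ℝ) (j : ℕ) (hj : 1 ≤ j) (x : ℝ) :
    HasDerivAt (ppd σ (j + 1)) ((j + 1 : ℝ) * ppd σ j x) x := by
  have h1 := pp_hasDerivAt j hj x
  have h2 := (pp_hasDerivAt j hj (x - σ)).comp_sub_const x σ
  have h3 := h1.sub h2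
  have h4 : HasDerivAt (ppd σ (j + 1)) _ x := h3
  exact h4.congr_deriv (by unfold ppd; ring)

lemma ppd_incr {σ L : ℝ} (hσ : 0 ≤ σ) (j : ℕ) (hj : 1 ≤ j) {u v : ℝ} (huv : u ≤ v)
    (hu : |u| ≤ L) (hv : |v| ≤ L) :
    0 ≤ ppd σ (j + 1) v - ppd σ (j + 1) u ∧
      ppd σ (j + 1) v - ppd σ (j + 1) u ≤ (j + 1) * L ^ j * (v - u) := by
  rcases huv.eq_or_lt with rfl | hlt
  · simp
  obtain ⟨c, hc, hc2⟩ := exists_hasDerivAt_eq_slope (ppd σ (j + 1)) (fun x => (j + 1 : ℝ) * ppd σ j x)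
    hlt (ppd_continuous _ _).continuousOn (fun x _ => ppd_hasDerivAt σ j hj x)
  rw [eq_div_iff (by linarith)] at hc2
  rw [← hc2]
  have hcL : |c| ≤ L := by
    rw [abs_le] at *
    exact ⟨by linarith [hc.1], by linarith [hc.2]⟩
  have h1 := ppd_nonneg hσ j c
  have h2 : ppd σ j c ≤ L ^ j := (ppd_le σ j c).trans (pow_le_pow_left₀ (abs_nonneg _) hcL j)
  have h3 : 0 ≤ v - u := by linarith
  constructor
  · positivity
  · gcongr

lemma ppd_bregman {σ L : ℝ} (hσ : 0 ≤ σ) (j : ℕ) (hj : 1 ≤ j) {u v : ℝ}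
    (hu : |u| ≤ L) (hv : |v| ≤ L) :
    0 ≤ ppd σ (j + 2) u - ppd σ (j + 2) v - (j + 2) * ppd σ (j + 1) v * (u - v) ∧
      ppd σ (j + 2) u - ppd σ (j + 2) v - (j + 2) * ppd σ (j + 1) v * (u - v)
        ≤ (j + 2) * ((j + 1) * L ^ j) * (u - v) ^ 2 := by
  have hd : ∀ x, HasDerivAt (ppd σ (j + 2)) ((j + 2 : ℝ) * ppd σ (j + 1) x) x := by
    intro x
    have := ppd_hasDerivAt σ (j + 1) (by omega) x
    convert this using 1
    push_cast; ring
  have hL : 0 ≤ L := (abs_nonneg u).trans hu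
  rcases lt_trichotomy u v with h | h | h
  · obtain ⟨c, hc, hc2⟩ := exists_hasDerivAt_eq_slope (ppd σ (j + 2)) _
      h (ppd_continuous _ _).continuousOn (fun x _ => hd x)
    rw [eq_div_iff (by linarith)] at hc2
    have hcL : |c| ≤ L := by
      rw [abs_le] at *
      exact ⟨by linarith [hc.1], by linarith [hc.2]⟩
    obtain ⟨h1, h2⟩ := ppd_incr hσ j hj hc.2.le hcL hv
    have h3 : ppd σ (j + 2) u - ppd σ (j + 2) v - (j + 2) * ppd σ (j + 1) v * (u - v)
      = (j + 2) * (ppd σ (j + 1) v - ppd σ (j + 1) c) * (v - u) := by linear_combination hc2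
    rw [h3]
    have h5 : ppd σ (j + 1) v - ppd σ (j + 1) c ≤ (j + 1) * L ^ j * (v - u) :=
      h2.trans (mul_le_mul_of_nonneg_left (by linarith [hc.1]) (by positivity))
    have h4 : 0 ≤ v - u := by linarith
    constructor
    · positivity
    · calc _ ≤ (j + 2) * ((j + 1) * L ^ j * (v - u)) * (v - u) := by gcongr
        _ = _ := by ring
  · subst h; simp
  · obtain ⟨c, hc, hc2⟩ := exists_hasDerivAt_eq_slope (ppd σ (j + 2)) _
      h (ppd_continuous _ _).continuousOn (fun x _ => hd x)
    rw [eq_div_iff (by linarith)] at hc2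
    have hcL : |c| ≤ L := by
      rw [abs_le] at *
      exact ⟨by linarith [hc.1], by linarith [hc.2]⟩
    obtain ⟨h1, h2⟩ := ppd_incr hσ j hj hc.1.le hv hcL
    have h3 : ppd σ (j + 2) u - ppd σ (j + 2) v - (j + 2) * ppd σ (j + 1) v * (u - v)
      = (j + 2) * (ppd σ (j + 1) c - ppd σ (j + 1) v) * (u - v) := by linear_combination -hc2
    rw [h3]
    have h5 : ppd σ (j + 1) c - ppd σ (j + 1) v ≤ (j + 1) * L ^ j * (u - v) :=
      h2.trans (mul_le_mul_of_nonneg_left (by linarith [hc.2]) (by positivity))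
    have h4 : 0 ≤ u - v := by linarith
    constructor
    · positivity
    · calc _ ≤ (j + 2) * ((j + 1) * L ^ j * (u - v)) * (u - v) := by gcongr
        _ = _ := by ring

/-- for `u > 0`, `σ ≤ θ u`, the difference is small relative to `u ^ j` -/
lemma ppd_small {σ θ : ℝ} (hσ : 0 ≤ σ) (j : ℕ) {u : ℝ} (hu : 0 < u) (hσu : σ ≤ θ * u)
    (hθ : θ ≤ 1) :
    ppd σ j u ≤ j * θ * u ^ j := by
  unfold ppd
  have hθ0 : 0 ≤ θ := by
    by_contra h
    push Not at h
    nlinarith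
  rw [max_eq_left hu.le, max_eq_left (by nlinarith)]
  have h1 : (u * (1 - θ)) ^ j ≤ (u - σ) ^ j := by
    apply pow_le_pow_left₀ (mul_nonneg hu.le (by linarith)); nlinarith
  have h2 : 1 + (j:ℝ) * (-θ) ≤ (1 + (-θ)) ^ j := one_add_mul_le_pow (by linarith) j
  rw [mul_pow] at h1
  have h3 : 0 ≤ u ^ j := by positivity
  have h4 : (1 + (j:ℝ) * (-θ)) * u ^ j ≤ (1 + (-θ)) ^ j * u ^ j := by gcongr
  have h5 : (1 + (-θ)) ^ j * u ^ j = u ^ j * (1 - θ) ^ j := by ring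
  nlinarith

end Aux2

section Aux3

noncomputable def Phi (a σ : ℝ) (m : ℕ) (u : ℝ) : ℝ := u ^ 2 / 2 + a * ppd σ m u
noncomputable def Phid (a σ : ℝ) (m : ℕ) (u : ℝ) : ℝ := u + a * m * ppd σ (m - 1) u

lemma Phi_continuous (a σ : ℝ) (m : ℕ) : Continuous (Phi a σ m) := by
  have := ppd_continuous σ m
  unfold Phi; fun_prop

lemma Phid_continuous (a σ : ℝ) (m : ℕ) : Continuous (Phid a σ m) := by
  have := ppd_continuous σ (m - 1)
  unfold Phid; fun_prop

lemma Phi_bregman {a L : ℝ} (ha : 0 ≤ a) (j : ℕ) (hj : 1 ≤ j) :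
    ∃ K : ℝ, 0 < K ∧ ∀ σ u v : ℝ, 0 ≤ σ → |u| ≤ L → |v| ≤ L →
      (u - v) ^ 2 / 2 ≤ Phi a σ (j + 2) u - (Phi a σ (j + 2) v + Phid a σ (j + 2) v * (u - v)) ∧
      Phi a σ (j + 2) u - (Phi a σ (j + 2) v + Phid a σ (j + 2) v * (u - v)) ≤ K * (u - v) ^ 2 := by
  refine ⟨1 / 2 + a * ((j + 2) * ((j + 1) * |L| ^ j)), by positivity, ?_⟩
  intro σ u v hσ hu hv
  have hL : |L| = L := abs_of_nonneg ((abs_nonneg u).trans hu)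
  obtain ⟨h1, h2⟩ := ppd_bregman hσ j hj hu hv
  have e : Phi a σ (j + 2) u - (Phi a σ (j + 2) v + Phid a σ (j + 2) v * (u - v)) =
      (u - v) ^ 2 / 2 +
      a * (ppd σ (j + 2) u - ppd σ (j + 2) v - (j + 2) * ppd σ (j + 1) v * (u - v)) := by
    unfold Phi Phid
    rw [show j + 2 - 1 = j + 1 by omega]
    push_cast
    ring
  rw [e, hL]
  constructor
  · have := mul_nonneg ha h1
    linarith
  · have := mul_le_mul_of_nonneg_left h2 ha
    linarith

lemma kernel_compare {a L : ℝ} (ha : 0 ≤ a) (hL : 1 ≤ L) (j : ℕ) (hj : 1 ≤ j) :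
    ∃ c : ℝ, 0 < c ∧ ∀ σ : ℝ, 0 ≤ σ → ∀ N : ℝ, 1 ≤ N → ∀ u : ℝ, |u| ≤ L →
      c * Real.exp (N * Phi a σ (j + 2) u) ≤
        √N * ∫ v in Set.Icc (-L) L,
          Real.exp (N * (Phi a σ (j + 2) v + Phid a σ (j + 2) v * (u - v))) ∧
      √N * ∫ v in Set.Icc (-L) L,
          Real.exp (N * (Phi a σ (j + 2) v + Phid a σ (j + 2) v * (u - v)))
        ≤ √(2 * π) * Real.exp (N * Phi a σ (j + 2) u) := by
  obtain ⟨K, hK, hbr⟩ := Phi_bregman (L := L) ha j hj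
  refine ⟨Real.exp (-K), Real.exp_pos _, ?_⟩
  intro σ hσ N hN u hu
  have hN0 : 0 < N := by linarith
  have hsN : 0 < √N := Real.sqrt_pos.2 hN0
  have hsN1 : 1 ≤ √N := Real.one_le_sqrt.2 hN
  have hcont : Continuous fun v => Real.exp (N * (Phi a σ (j + 2) v + Phid a σ (j + 2) v * (u - v))) := by
    have := Phi_continuous a σ (j + 2)
    have := Phid_continuous a σ (j + 2)
    fun_prop
  have hintg : IntegrableOn (fun v => Real.exp (N * (Phi a σ (j + 2) v + Phid a σ (j + 2) v * (u - v))))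
      (Set.Icc (-L) L) := hcont.continuousOn.integrableOn_compact isCompact_Icc
  constructor
  · -- an interval of length 1/√N
    obtain ⟨p, hp1, hp2⟩ : ∃ p : ℝ, Set.Icc p (p + 1 / √N) ⊆ Set.Icc (-L) L ∧
        ∀ v ∈ Set.Icc p (p + 1 / √N), |u - v| ≤ 1 / √N := by
      have h1 : 1 / √N ≤ 1 := by rw [div_le_one hsN]; exact hsN1
      have h1' : 0 < 1 / √N := by positivity
      rw [abs_le] at hu
      rcases le_total u 0 with h | h
      · refine ⟨u, Set.Icc_subset_Icc hu.1 (by linarith), fun v hv => ?_⟩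
        rw [abs_le]; constructor <;> linarith [hv.1, hv.2]
      · refine ⟨u - 1 / √N, Set.Icc_subset_Icc (by linarith) (by linarith), fun v hv => ?_⟩
        rw [abs_le]; constructor <;> linarith [hv.1, hv.2]
    have h2 : ∫ v in Set.Icc p (p + 1 / √N), Real.exp (-K) * Real.exp (N * Phi a σ (j + 2) u)
        ≤ ∫ v in Set.Icc p (p + 1 / √N),
          Real.exp (N * (Phi a σ (j + 2) v + Phid a σ (j + 2) v * (u - v))) := by
      apply setIntegral_mono_on continuous_const.integrableOn_Icc (hintg.mono_set hp1) measurableSet_Icc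
      intro v hv
      rw [← Real.exp_add]
      apply Real.exp_le_exp.2
      have h3 := (hbr σ u v hσ hu (abs_le.2 (hp1 hv))).2
      have h4 : N * (u - v) ^ 2 ≤ 1 := by
        have := hp2 v hv
        have h5 : (u - v) ^ 2 ≤ (1 / √N) ^ 2 := by
          rw [← sq_abs]; exact pow_le_pow_left₀ (abs_nonneg _) this 2
        rw [div_pow, Real.sq_sqrt hN0.le, one_pow, le_div_iff₀ hN0] at h5
        linarith
      have h6 := mul_le_mul_of_nonneg_left h3 hN0.le
      have h7 := mul_le_mul_of_nonneg_left h4 hK.le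
      nlinarith
    have h3 : ∫ v in Set.Icc p (p + 1 / √N),
          Real.exp (N * (Phi a σ (j + 2) v + Phid a σ (j + 2) v * (u - v))) ≤
          ∫ v in Set.Icc (-L) L,
          Real.exp (N * (Phi a σ (j + 2) v + Phid a σ (j + 2) v * (u - v))) := by
      apply setIntegral_mono_set hintg
      · exact Filter.Eventually.of_forall fun v => (Real.exp_pos _).le
      · exact Filter.Eventually.of_forall hp1
    have h4 : ∫ v in Set.Icc p (p + 1 / √N), Real.exp (-K) * Real.exp (N * Phi a σ (j + 2) u)
        = 1 / √N * (Real.exp (-K) * Real.exp (N * Phi a σ (j + 2) u)) := by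
      rw [setIntegral_const]
      simp [Measure.real]
    rw [h4] at h2
    have h5 := mul_le_mul_of_nonneg_left (h2.trans h3) hsN.le
    rw [← mul_assoc, mul_one_div_cancel hsN.ne', one_mul] at h5
    exact h5
  · have h1 : ∫ v in Set.Icc (-L) L,
          Real.exp (N * (Phi a σ (j + 2) v + Phid a σ (j + 2) v * (u - v)))
        ≤ ∫ v in Set.Icc (-L) L,
          Real.exp (N * Phi a σ (j + 2) u) * Real.exp (-(N / 2) * (u - v) ^ 2) := by
      apply setIntegral_mono_on hintg _ measurableSet_Icc
      · intro v hv
        rw [← Real.exp_add]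
        apply Real.exp_le_exp.2
        have h3 := (hbr σ u v hσ hu (abs_le.2 hv)).1
        have h6 := mul_le_mul_of_nonneg_left h3 hN0.le
        nlinarith
      · exact (by fun_prop : Continuous fun v => Real.exp (N * Phi a σ (j + 2) u) *
          Real.exp (-(N / 2) * (u - v) ^ 2)).continuousOn.integrableOn_compact isCompact_Icc
    have hg : Integrable (fun v : ℝ => Real.exp (-(N / 2) * (u - v) ^ 2)) :=
      (integrable_exp_neg_mul_sq (by positivity : 0 < N / 2)).comp_sub_left u
    have h2 : ∫ v in Set.Icc (-L) L, Real.exp (-(N / 2) * (u - v) ^ 2) ≤ √(π / (N / 2)) := by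
      rw [← integral_gaussian (N / 2)]
      rw [← integral_sub_left_eq_self (fun v : ℝ => Real.exp (-(N / 2) * v ^ 2)) volume u]
      exact setIntegral_le_integral hg (Filter.Eventually.of_forall fun v => (Real.exp_pos _).le)
    rw [integral_const_mul] at h1
    have h3 : √N * √(π / (N / 2)) = √(2 * π) := by
      rw [← Real.sqrt_mul hN0.le]
      congr 1
      field_simp
    calc _ ≤ √N * (Real.exp (N * Phi a σ (j + 2) u) * √(π / (N / 2))) := by
          gcongr
          exact h1.trans (by gcongr)
      _ = √N * √(π / (N / 2)) * Real.exp (N * Phi a σ (j + 2) u) := by ring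
      _ = _ := by rw [h3]

lemma aux_decay {c : ℝ} (hc : 0 < c) {m : ℕ} (hm : 4 ≤ m) (hev : Even m) (w : ℝ) :
    w ^ 4 * Real.exp (-(c * w ^ m)) ≤ (2 + 4 / c ^ 2) * (1 + w ^ 2)⁻¹ := by
  rw [← div_eq_mul_inv, le_div_iff₀ (by positivity)]
  have hwm : 0 ≤ w ^ m := hev.pow_nonneg w
  have hp : 0 < 4 / c ^ 2 := by positivity
  by_cases hw : w ^ 2 ≤ 1
  · have h1 : Real.exp (-(c * w ^ m)) ≤ 1 := Real.exp_le_one_iff.2 (by nlinarith [mul_nonneg hc.le hwm])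
    have h2 : w ^ 4 ≤ 1 := by nlinarith [sq_nonneg w]
    calc w ^ 4 * Real.exp (-(c * w ^ m)) * (1 + w ^ 2) ≤ 1 * 1 * (1 + 1) := by gcongr
      _ ≤ 2 + 4 / c ^ 2 := by linarith
  · push Not at hw
    have h1 : w ^ 4 ≤ w ^ m := by
      rw [← hev.pow_abs, ← (show Even 4 by decide).pow_abs]
      apply pow_le_pow_right₀ _ hm
      rw [← sq_abs] at hw
      nlinarith [abs_nonneg w]
    set x := c * w ^ 4 with hx
    have hx0 : 0 ≤ x := by positivity
    have h2 : x ^ 2 / 2 ≤ Real.exp x := by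
      have := Real.quadratic_le_exp_of_nonneg hx0
      linarith
    have h3 : Real.exp (-(c * w ^ m)) ≤ Real.exp (-x) := by
      apply Real.exp_le_exp.2
      have := mul_le_mul_of_nonneg_left h1 hc.le
      linarith
    have h4 : x ^ 2 * Real.exp (-x) ≤ 2 := by
      rw [Real.exp_neg, ← div_eq_mul_inv, div_le_iff₀ (Real.exp_pos _)]; linarith
    have h5 : w ^ 4 * (1 + w ^ 2) ≤ 2 * w ^ 8 := by
      have : 1 + w ^ 2 ≤ 2 * w ^ 4 := by nlinarith
      calc _ ≤ w ^ 4 * (2 * w ^ 4) := by gcongr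
        _ = _ := by ring
    calc w ^ 4 * Real.exp (-(c * w ^ m)) * (1 + w ^ 2)
        ≤ w ^ 4 * Real.exp (-x) * (1 + w ^ 2) := by gcongr
      _ = w ^ 4 * (1 + w ^ 2) * Real.exp (-x) := by ring
      _ ≤ 2 * w ^ 8 * Real.exp (-x) := by gcongr
      _ = 2 / c ^ 2 * (x ^ 2 * Real.exp (-x)) := by rw [hx]; field_simp
      _ ≤ 2 / c ^ 2 * 2 := by gcongr
      _ ≤ _ := by
        have : 2 / c ^ 2 * 2 = 4 / c ^ 2 := by ring
        linarith

noncomputable def Psi (h : ℝ → ℝ) (a σ : ℝ) (m : ℕ) (v : ℝ) : ℝ :=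
  Phi a σ m v - v * Phid a σ m v + (Phid a σ m v) ^ 2 / 2 - h (Phid a σ m v)

lemma Psi_eq (h : ℝ → ℝ) (a σ : ℝ) (m : ℕ) (v : ℝ) :
    Psi h a σ m v = a * ppd σ m v + (a * m * ppd σ (m - 1) v) ^ 2 / 2 - h (Phid a σ m v) := by
  unfold Psi Phi Phid; ring

lemma Psi_continuous {h : ℝ → ℝ} (hc : Continuous h) (a σ : ℝ) (m : ℕ) :
    Continuous (Psi h a σ m) := by
  have := Phi_continuous a σ m
  have := Phid_continuous a σ m
  unfold Psi; fun_prop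

lemma Phid_abs {a σ L : ℝ} (ha : 0 ≤ a) (hσ : 0 ≤ σ) (hL : 1 ≤ L) {m : ℕ} (hm : 2 ≤ m) {v : ℝ}
    (hv : |v| ≤ L) : |Phid a σ m v| ≤ (1 + a * m * L ^ m) * |v| := by
  unfold Phid
  have h1 := ppd_nonneg hσ (m - 1) v
  have h2 := ppd_le σ (m - 1) v
  have h3 : |v| ^ (m - 1) ≤ L ^ m * |v| := by
    obtain ⟨p, rfl⟩ := Nat.exists_eq_add_of_le hm
    rw [show 2 + p - 1 = p + 1 by omega, pow_succ]
    gcongr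
    calc |v| ^ p ≤ L ^ p := by gcongr
      _ ≤ L ^ (2 + p) := pow_le_pow_right₀ hL (by omega)
  calc _ ≤ |v| + |a * m * ppd σ (m - 1) v| := abs_add_le _ _
    _ = |v| + a * m * ppd σ (m - 1) v := by
      rw [abs_of_nonneg (a := a * m * ppd σ (m - 1) v) (by positivity)]
    _ ≤ |v| + a * m * (L ^ m * |v|) := by gcongr; exact h2.trans h3
    _ = _ := by ring

lemma Psi_far {h : ℝ → ℝ} {a L c : ℝ} (ha : 0 ≤ a) (hL : 1 ≤ L) (hc : 0 < c) {m : ℕ}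
    (hm : 4 ≤ m) (hev : Even m)
    (hh : ∀ t, |t| ≤ (1 + a * m * L ^ m) * L → c * t ^ m ≤ h t) :
    ∃ θ : ℝ, 0 < θ ∧ ∀ σ v : ℝ, 0 ≤ σ → |v| ≤ L → (v ≤ 0 ∨ σ ≤ θ * v) →
      Psi h a σ m v ≤ -(c / 2 * v ^ m) := by
  set D := a * m + a ^ 2 * m ^ 4 * L ^ m + 1 with hD
  have hDpos : 0 < D := by positivity
  refine ⟨min 1 (c / (2 * D)), by positivity, ?_⟩
  set θ := min 1 (c / (2 * D)) with hθ
  have hθ0 : 0 < θ := by positivity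
  have hθ1 : θ ≤ 1 := min_le_left _ _
  have hθD : θ * D ≤ c / 2 := by
    have : θ ≤ c / (2 * D) := min_le_right _ _
    rw [le_div_iff₀ (by positivity)] at this
    linarith
  intro σ v hσ hv hor
  have hvm : 0 ≤ v ^ m := hev.pow_nonneg v
  have hbound : |Phid a σ m v| ≤ (1 + a * m * L ^ m) * L :=
    (Phid_abs ha hσ hL (by omega) hv).trans (by gcongr)
  have h1 := hh _ hbound
  rw [Psi_eq]
  by_cases hv0 : v ≤ 0
  · have e1 := ppd_neg hσ (by omega : 1 ≤ m) hv0
    have e2 := ppd_neg hσ (by omega : 1 ≤ m - 1) hv0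
    have e3 : Phid a σ m v = v := by unfold Phid; rw [e2]; ring
    rw [e1, e2]
    rw [e3] at h1 ⊢
    nlinarith [mul_nonneg hc.le hvm]
  · push Not at hv0
    have hσv : σ ≤ θ * v := by
      rcases hor with h | h
      · linarith
      · exact h
    have p0 := ppd_nonneg hσ (m - 1) v
    have p1 := ppd_small hσ m hv0 hσv hθ1
    have p2 := ppd_small hσ (m - 1) hv0 hσv hθ1
    have hge : v ≤ Phid a σ m v := by
      unfold Phid
      have : 0 ≤ a * m * ppd σ (m - 1) v := by positivity
      linarith
    have hpow : v ^ m ≤ (Phid a σ m v) ^ m := pow_le_pow_left₀ hv0.le hge m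
    have hsq : (ppd σ (m - 1) v) ^ 2 ≤ θ * (m ^ 2 * L ^ m * v ^ m) := by
      have hcast : ((m - 1 : ℕ) : ℝ) ≤ m := by exact_mod_cast Nat.sub_le m 1
      have q1 : ppd σ (m - 1) v ≤ m * θ * v ^ (m - 1) := p2.trans (by gcongr)
      have q2 : (v ^ (m - 1)) ^ 2 ≤ L ^ m * v ^ m := by
        have : (v ^ (m - 1)) ^ 2 = v ^ (m - 2) * v ^ m := by
          rw [← pow_mul, ← pow_add]; congr 1; omega
        rw [this]
        gcongr
        calc v ^ (m - 2) ≤ L ^ (m - 2) := by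
              gcongr; exact (le_abs_self v).trans hv
          _ ≤ L ^ m := pow_le_pow_right₀ hL (by omega)
      calc (ppd σ (m - 1) v) ^ 2 ≤ (m * θ * v ^ (m - 1)) ^ 2 := by gcongr
        _ = θ * θ * (m ^ 2 * (v ^ (m - 1)) ^ 2) := by ring
        _ ≤ 1 * θ * (m ^ 2 * (L ^ m * v ^ m)) := by gcongr
        _ = _ := by ring
    have g1 : a * ppd σ m v ≤ a * (m * θ * v ^ m) := by gcongr
    have g2 : (a * m * ppd σ (m - 1) v) ^ 2 / 2 ≤ (a * m) ^ 2 * (θ * (m ^ 2 * L ^ m * v ^ m)) := by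
      rw [mul_pow]
      have : 0 ≤ (a * m) ^ 2 * (ppd σ (m - 1) v) ^ 2 := by positivity
      have : (a * m) ^ 2 * (ppd σ (m - 1) v) ^ 2 ≤ (a * m) ^ 2 * (θ * (m ^ 2 * L ^ m * v ^ m)) := by
        gcongr
      linarith
    have g3 : a * (m * θ * v ^ m) + (a * m) ^ 2 * (θ * (m ^ 2 * L ^ m * v ^ m)) ≤ c / 2 * v ^ m := by
      have : a * (m * θ * v ^ m) + (a * m) ^ 2 * (θ * (m ^ 2 * L ^ m * v ^ m))
          = θ * (D - 1) * v ^ m := by rw [hD]; ring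
      rw [this]
      gcongr
      nlinarith
    have g4 := mul_le_mul_of_nonneg_left hpow hc.le
    linarith

lemma Psi_moment {h : ℝ → ℝ} {a L c C2 : ℝ} (hcont : Continuous h)
    (ha : 0 ≤ a) (hL : 1 ≤ L) (hc : 0 < c) (hC2 : 0 < C2) {m : ℕ}
    (hm : 4 ≤ m) (hev : Even m)
    (hh : ∀ t, |t| ≤ (1 + a * m * L ^ m) * L → c * t ^ m ≤ h t ∧ h t ≤ C2 * t ^ m) :
    ∃ C : ℝ, 0 < C ∧ ∀ N r σ : ℝ, 0 < N → 0 < r → r ≤ 1 → N * r ^ m = 1 → 0 ≤ σ →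
      ∫ v in Set.Icc (-L) L, v ^ 4 * Real.exp (N * Psi h a σ m v) ≤
        C * (r ^ 4 + σ ^ 4) * ∫ v in Set.Icc (-L) L, Real.exp (N * Psi h a σ m v) := by
  obtain ⟨θ, hθ, hfar⟩ := Psi_far ha hL hc hm hev (fun t ht => (hh t ht).1)
  set C3 := 2 + 4 / (c / 2) ^ 2 with hC3
  have hC3pos : 0 < C3 := by positivity
  refine ⟨1 / θ ^ 4 + C3 * π * Real.exp C2, by positivity, ?_⟩
  intro N r σ hN hr hr1 hNr hσ
  set J := ∫ v in Set.Icc (-L) L, Real.exp (N * Psi h a σ m v) with hJ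
  have hPc := Psi_continuous hcont a σ m
  have hi1 : IntegrableOn (fun v => Real.exp (N * Psi h a σ m v)) (Set.Icc (-L) L) :=
    (by fun_prop : Continuous fun v => Real.exp (N * Psi h a σ m v)).continuousOn.integrableOn_compact
      isCompact_Icc
  have hi2 : IntegrableOn (fun v => v ^ 4 * Real.exp (N * Psi h a σ m v)) (Set.Icc (-L) L) :=
    (by fun_prop : Continuous fun v => v ^ 4 * Real.exp (N * Psi h a σ m v)).continuousOn.integrableOn_compact
      isCompact_Icc
  -- lower bound for J
  have hJlow : r * Real.exp (-C2) ≤ J := by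
    have hsub : Set.Icc (-r) 0 ⊆ Set.Icc (-L) L := Set.Icc_subset_Icc (by linarith) (by linarith)
    have h1 : ∫ v in Set.Icc (-r) 0, Real.exp (-C2) ≤
        ∫ v in Set.Icc (-r) 0, Real.exp (N * Psi h a σ m v) := by
      apply setIntegral_mono_on (by simp) (hi1.mono_set hsub) measurableSet_Icc
      intro v hv
      apply Real.exp_le_exp.2
      have e1 := ppd_neg hσ (by omega : 1 ≤ m) hv.2
      have e2 := ppd_neg hσ (by omega : 1 ≤ m - 1) hv.2
      have e3 : Phid a σ m v = v := by unfold Phid; rw [e2]; ring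
      rw [Psi_eq, e1, e2, e3]
      have hvL : |v| ≤ L := abs_le.2 (hsub hv)
      have hb := (hh v (hvL.trans (by
        have : 0 ≤ a * m * L ^ m * L := by positivity
        linarith))).2
      have hvr : v ^ m ≤ r ^ m := by
        rw [← hev.pow_abs]
        apply pow_le_pow_left₀ (abs_nonneg v)
        rw [abs_le]; constructor <;> linarith [hv.1, hv.2]
      have : N * h v ≤ N * (C2 * r ^ m) :=
        mul_le_mul_of_nonneg_left (hb.trans (by gcongr)) hN.le
      have e4 : N * (C2 * r ^ m) = C2 := by linear_combination C2 * hNr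
      nlinarith
    have h2 : ∫ v in Set.Icc (-r) 0, Real.exp (N * Psi h a σ m v) ≤ J := by
      apply setIntegral_mono_set hi1
      · exact Filter.Eventually.of_forall fun v => (Real.exp_pos _).le
      · exact Filter.Eventually.of_forall hsub
    have h3 : ∫ v in Set.Icc (-r) 0, Real.exp (-C2) = r * Real.exp (-C2) := by
      rw [setIntegral_const]
      simp [Measure.real, hr.le]
    linarith
  have hcauchy : Integrable (fun v : ℝ => (1 + (v / r) ^ 2)⁻¹) :=
    integrable_inv_one_add_sq.comp_div hr.ne'
  have hpt : ∀ v ∈ Set.Icc (-L) L, v ^ 4 * Real.exp (N * Psi h a σ m v) ≤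
      (σ / θ) ^ 4 * Real.exp (N * Psi h a σ m v) + r ^ 4 * C3 * (1 + (v / r) ^ 2)⁻¹ := by
    intro v hv
    have hn1 : 0 ≤ (σ / θ) ^ 4 * Real.exp (N * Psi h a σ m v) := by positivity
    have hn2 : 0 ≤ r ^ 4 * C3 * (1 + (v / r) ^ 2)⁻¹ := by positivity
    by_cases hcase : v ≤ 0 ∨ σ ≤ θ * v
    · have h1 := hfar σ v hσ (abs_le.2 hv) hcase
      have h2 := aux_decay (half_pos hc) hm hev (v / r)
      have h3 : Real.exp (N * Psi h a σ m v) ≤ Real.exp (-(c / 2 * (v / r) ^ m)) := by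
        apply Real.exp_le_exp.2
        have e : (v / r) ^ m = N * v ^ m := by
          rw [div_pow, div_eq_iff (by positivity)]
          linear_combination -v ^ m * hNr
        rw [e]
        have := mul_le_mul_of_nonneg_left h1 hN.le
        linarith
      have h4 : v ^ 4 = r ^ 4 * (v / r) ^ 4 := by field_simp
      calc v ^ 4 * Real.exp (N * Psi h a σ m v) ≤ v ^ 4 * Real.exp (-(c / 2 * (v / r) ^ m)) := by gcongr
        _ = r ^ 4 * ((v / r) ^ 4 * Real.exp (-(c / 2 * (v / r) ^ m))) := by rw [h4]; ring
        _ ≤ r ^ 4 * (C3 * (1 + (v / r) ^ 2)⁻¹) := by gcongr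
        _ ≤ _ := by linarith
    · push Not at hcase
      have h1 : v ≤ σ / θ := by
        rw [le_div_iff₀ hθ]; linarith [hcase.2]
      have h2 : v ^ 4 ≤ (σ / θ) ^ 4 := pow_le_pow_left₀ hcase.1.le h1 4
      have := mul_le_mul_of_nonneg_right h2 (Real.exp_pos (N * Psi h a σ m v)).le
      linarith
  have hI : ∫ v in Set.Icc (-L) L, v ^ 4 * Real.exp (N * Psi h a σ m v) ≤
      (σ / θ) ^ 4 * J + r ^ 4 * C3 * ∫ v in Set.Icc (-L) L, (1 + (v / r) ^ 2)⁻¹ := by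
    rw [hJ, ← integral_const_mul, ← integral_const_mul,
      ← integral_add (hi1.const_mul _) (hcauchy.integrableOn.const_mul _)]
    exact setIntegral_mono_on hi2 ((hi1.const_mul _).add (hcauchy.integrableOn.const_mul _))
      measurableSet_Icc hpt
  have hCau : ∫ v in Set.Icc (-L) L, (1 + (v / r) ^ 2)⁻¹ ≤ r * π := by
    have h1 : ∫ v in Set.Icc (-L) L, (1 + (v / r) ^ 2)⁻¹ ≤ ∫ v : ℝ, (1 + (v / r) ^ 2)⁻¹ :=
      setIntegral_le_integral hcauchy (Filter.Eventually.of_forall fun v => by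
        simp only [Pi.zero_apply]; positivity)
    rw [Measure.integral_comp_div (fun v : ℝ => (1 + v ^ 2)⁻¹) r, integral_univ_inv_one_add_sq,
      abs_of_pos hr] at h1
    exact h1
  have hrJ : r ≤ Real.exp C2 * J := by
    have := mul_le_mul_of_nonneg_left hJlow (Real.exp_pos C2).le
    have e : Real.exp C2 * (r * Real.exp (-C2)) = r := by
      rw [mul_left_comm, ← Real.exp_add]; simp
    linarith
  have hJ0 : 0 ≤ J := (by positivity : 0 ≤ r * Real.exp (-C2)).trans hJlow
  calc _ ≤ (σ / θ) ^ 4 * J + r ^ 4 * C3 * ∫ v in Set.Icc (-L) L, (1 + (v / r) ^ 2)⁻¹ := hI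
    _ ≤ (σ / θ) ^ 4 * J + r ^ 4 * C3 * ((Real.exp C2 * J) * π) := by
      gcongr
      exact hCau.trans (by gcongr)
    _ = (1 / θ ^ 4 * σ ^ 4 + C3 * π * Real.exp C2 * r ^ 4) * J := by
      rw [div_pow]; ring
    _ ≤ _ := by
      gcongr
      have h1 : 0 ≤ 1 / θ ^ 4 * r ^ 4 := by positivity
      have h2 : 0 ≤ C3 * π * Real.exp C2 * σ ^ 4 := by positivity
      nlinarith

end Aux3

section Aux4

lemma aux_update_mp (ρ : Measure ℝ) [IsProbabilityMeasure ρ] {n : ℕ} (i : Fin n) :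
    MeasurePreserving (fun p : (Fin n → ℝ) × ℝ => Function.update p.1 i p.2)
      ((Measure.pi fun _ : Fin n => ρ).prod ρ) (Measure.pi fun _ : Fin n => ρ) := by
  have hmeas : Measurable (fun p : (Fin n → ℝ) × ℝ => Function.update p.1 i p.2) := by
    rw [measurable_pi_iff]
    intro l
    by_cases h : l = i
    · subst h; simp only [Function.update_self]; fun_prop
    · simp only [Function.update_of_ne h]; fun_prop
  refine ⟨hmeas, ?_⟩
  symm
  apply Measure.pi_eq
  intro s hs
  rw [Measure.map_apply hmeas (MeasurableSet.univ_pi hs)]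
  have hpre : (fun p : (Fin n → ℝ) × ℝ => Function.update p.1 i p.2) ⁻¹' (Set.univ.pi s)
      = (Set.univ.pi (Function.update s i Set.univ)) ×ˢ (s i) := by
    ext p
    simp only [Set.mem_preimage, Set.mem_pi, Set.mem_univ, true_implies, Set.mem_prod]
    constructor
    · intro h
      refine ⟨fun l => ?_, by simpa using h i⟩
      by_cases hl : l = i
      · subst hl; simp
      · simpa [Function.update_of_ne hl] using h l
    · rintro ⟨h1, h2⟩ l
      by_cases hl : l = i
      · subst hl; simpa using h2
      · simpa [Function.update_of_ne hl] using h1 l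
  rw [hpre, Measure.prod_prod, Measure.pi_pi,
    Finset.prod_eq_mul_prod_sdiff_singleton_of_mem (Finset.mem_univ i) (fun l => ρ (s l)),
    Finset.prod_eq_mul_prod_sdiff_singleton_of_mem (Finset.mem_univ i)]
  simp only [Function.update_self, measure_univ, one_mul]
  rw [mul_comm]
  congr 1
  apply Finset.prod_congr rfl
  intro l hl
  rw [Function.update_of_ne (by simpa using hl)]

lemma aux_fubini (ρ : Measure ℝ) [IsProbabilityMeasure ρ] {n : ℕ} (i : Fin n)
    {H : (Fin n → ℝ) → ℝ} (hH : Integrable H (Measure.pi fun _ : Fin n => ρ)) :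
    ∫ x, H x ∂(Measure.pi fun _ : Fin n => ρ)
      = ∫ x, ∫ y, H (Function.update x i y) ∂ρ ∂(Measure.pi fun _ : Fin n => ρ) := by
  have hmp := aux_update_mp ρ i
  have h1 : Integrable (fun p : (Fin n → ℝ) × ℝ => H (Function.update p.1 i p.2))
      ((Measure.pi fun _ : Fin n => ρ).prod ρ) := hmp.integrable_comp_of_integrable hH
  rw [← integral_prod _ h1]
  conv_lhs => rw [← hmp.map_eq]
  rw [integral_map hmp.measurable.aemeasurable]
  rw [hmp.map_eq]; exact hH.aestronglyMeasurable

/-- partition function -/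
noncomputable def cwZ (ρ : Measure ℝ) (n : ℕ) : ℝ :=
  ∫ y : Fin n → ℝ, Real.exp ((∑ i, y i) ^ 2 / (2 * n)) ∂(Measure.pi fun _ : Fin n => ρ)

lemma cwZ_pos {ρ : Measure ℝ} [IsProbabilityMeasure ρ] {L : ℝ}
    (hb : ∀ᵐ x ∂ρ, |x| ≤ L) (n : ℕ) : 0 < cwZ ρ n :=
  integral_exp_pos (aux_intn hb (by fun_prop))

lemma cw_integral {ρ : Measure ℝ} [IsProbabilityMeasure ρ] {L : ℝ}
    (hb : ∀ᵐ x ∂ρ, |x| ≤ L) (n : ℕ) (f : (Fin n → ℝ) → ℝ) :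
    ∫ x, f x ∂cwMeasure ρ n = (cwZ ρ n)⁻¹ *
      ∫ x, f x * Real.exp ((∑ i, x i) ^ 2 / (2 * n)) ∂(Measure.pi fun _ : Fin n => ρ) := by
  have hZ := cwZ_pos hb n
  unfold cwMeasure
  rw [integral_withDensity_eq_integral_toReal_smul (by fun_prop) (by simp), ← integral_const_mul]
  congr 1
  ext x
  change (ENNReal.ofReal (_ / cwZ ρ n)).toReal • _ = _
  rw [ENNReal.toReal_ofReal (div_nonneg (Real.exp_pos _).le hZ.le), smul_eq_mul]
  field_simp

lemma cw_ac (ρ : Measure ℝ) [IsProbabilityMeasure ρ] (n : ℕ) :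
    cwMeasure ρ n ≪ Measure.pi fun _ : Fin n => ρ := withDensity_absolutelyContinuous _ _

lemma cw_finite {ρ : Measure ℝ} [IsProbabilityMeasure ρ] {L : ℝ}
    (hb : ∀ᵐ x ∂ρ, |x| ≤ L) (n : ℕ) : IsFiniteMeasure (cwMeasure ρ n) := by
  apply isFiniteMeasure_withDensity_ofReal
  exact (aux_intn hb (by fun_prop : Continuous fun x : Fin n → ℝ =>
    Real.exp ((∑ i, x i) ^ 2 / (2 * n)) / _)).2

lemma cw_integrable {ρ : Measure ℝ} [IsProbabilityMeasure ρ] {L : ℝ}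
    (hb : ∀ᵐ x ∂ρ, |x| ≤ L) {n : ℕ} {f : (Fin n → ℝ) → ℝ} (hf : Continuous f) :
    Integrable f (cwMeasure ρ n) := by
  have := cw_finite hb n
  refine aux_integrable_of_compact
    (isCompact_univ_pi (fun _ : Fin n => isCompact_Icc (a := -L) (b := L))) ?_ hf
  filter_upwards [(cw_ac ρ n).ae_le (aux_pi_bdd hb n)] with x hx
  intro i _
  exact abs_le.1 (hx i)

/-- one-site conditional moments -/
noncomputable def siteNum (ρ : Measure ℝ) (n : ℕ) (f : ℝ → ℝ) (T : ℝ) : ℝ :=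
  ∫ y, f y * Real.exp ((T + y) ^ 2 / (2 * n)) ∂ρ

lemma siteNum_meas (ρ : Measure ℝ) [IsProbabilityMeasure ρ] (n : ℕ) {f : ℝ → ℝ} (hf : Continuous f) :
    Measurable (siteNum ρ n f) := by
  unfold siteNum
  apply StronglyMeasurable.measurable
  apply StronglyMeasurable.integral_prod_right
    (f := fun T y : ℝ => f y * Real.exp ((T + y) ^ 2 / (2 * n)))
  exact (by fun_prop : Continuous fun p : ℝ × ℝ =>
    f p.2 * Real.exp ((p.1 + p.2) ^ 2 / (2 * n))).stronglyMeasurable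

lemma siteNum_eq (ρ : Measure ℝ) {n : ℕ} (f : ℝ → ℝ) (T : ℝ) (hn : 1 ≤ n) :
    siteNum ρ n f T = Real.exp (T ^ 2 / (2 * n)) *
      ∫ y, f y * Real.exp ((1 / (2 * n)) * y ^ 2 + (T / n) * y) ∂ρ := by
  unfold siteNum
  rw [← integral_const_mul]
  congr 1
  ext y
  rw [mul_left_comm, ← Real.exp_add]
  congr 2
  have : (n:ℝ) ≠ 0 := by positivity
  field_simp
  ring

/-- explicit conditional expectation -/
noncomputable def ceq (ρ : Measure ℝ) (n : ℕ) (i : Fin n) (x : Fin n → ℝ) : ℝ :=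
  siteNum ρ n (fun y => y ^ 2) (∑ l, Function.update x i 0 l) /
    siteNum ρ n (fun _ => 1) (∑ l, Function.update x i 0 l)

lemma den_pos {ρ : Measure ℝ} [IsProbabilityMeasure ρ] {L : ℝ}
    (hb : ∀ᵐ x ∂ρ, |x| ≤ L) (n : ℕ) (T : ℝ) : 0 < siteNum ρ n (fun _ => 1) T := by
  unfold siteNum
  simp only [one_mul]
  exact integral_exp_pos (aux_int1 hb (by fun_prop))

lemma ceq_bound {ρ : Measure ℝ} [IsProbabilityMeasure ρ] {L : ℝ}
    (hb : ∀ᵐ x ∂ρ, |x| ≤ L) (n : ℕ) (i : Fin n) (x : Fin n → ℝ) : ‖ceq ρ n i x‖ ≤ L ^ 2 := by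
  unfold ceq
  set T := ∑ l, Function.update x i 0 l
  have hd := den_pos hb n T
  have h0 : 0 ≤ siteNum ρ n (fun y => y ^ 2) T := by
    unfold siteNum
    apply integral_nonneg
    intro y; positivity
  rw [Real.norm_eq_abs, abs_of_nonneg (by positivity), div_le_iff₀ hd]
  unfold siteNum
  rw [← integral_const_mul]
  apply integral_mono_ae (aux_int1 hb (by fun_prop)) (aux_int1 hb (by fun_prop))
  filter_upwards [hb] with y hy
  have : y ^ 2 ≤ L ^ 2 := sq_le_sq' (by linarith [abs_le.1 hy]) (abs_le.1 hy).2
  rw [one_mul]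
  gcongr

lemma sum_update {n : ℕ} (i : Fin n) (x : Fin n → ℝ) (y : ℝ) :
    ∑ l, Function.update x i y l = (∑ l, Function.update x i 0 l) + y := by
  rw [Finset.sum_update_of_mem (Finset.mem_univ i), Finset.sum_update_of_mem (Finset.mem_univ i)]
  ring

lemma measurable_upd0 {n : ℕ} (i : Fin n) :
    Measurable (fun x : Fin n → ℝ => Function.update x i (0:ℝ)) := by
  rw [measurable_pi_iff]
  intro l
  by_cases h : l = i
  · subst h; simp only [Function.update_self]; fun_prop
  · simp only [Function.update_of_ne h]; fun_prop

lemma ceq_meas {ρ : Measure ℝ} [IsProbabilityMeasure ρ] (n : ℕ) (i : Fin n) :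
    Measurable[Fi n i] (ceq ρ n i) := by
  have h1 : Measurable (fun z : Fin n → ℝ => siteNum ρ n (fun y => y ^ 2) (∑ l, z l) /
    siteNum ρ n (fun _ => 1) (∑ l, z l)) := by
    have a1 := siteNum_meas ρ n (f := fun y => y ^ 2) (by fun_prop)
    have a2 := siteNum_meas ρ n (f := fun y => (1:ℝ)) (by fun_prop)
    have a3 : Measurable fun z : Fin n → ℝ => ∑ l, z l := by fun_prop
    exact (a1.comp a3).div (a2.comp a3)
  exact h1.comp (comap_measurable (fun x : Fin n → ℝ => Function.update x i (0:ℝ)))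

lemma Fi_le {n : ℕ} (i : Fin n) : Fi n i ≤ (inferInstance : MeasurableSpace (Fin n → ℝ)) :=
  (measurable_upd0 i).comap_le

lemma ceq_condExp {ρ : Measure ℝ} [IsProbabilityMeasure ρ] {L : ℝ}
    (hb : ∀ᵐ x ∂ρ, |x| ≤ L) (n : ℕ) (i : Fin n) :
    ceq ρ n i =ᵐ[cwMeasure ρ n] (cwMeasure ρ n)[fun y => (y i) ^ 2 | Fi n i] := by
  have := cw_finite hb n
  have hm : Measurable (ceq ρ n i) := (ceq_meas n i).mono (Fi_le i) le_rfl
  have hqint : Integrable (ceq ρ n i) (cwMeasure ρ n) :=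
    Integrable.of_bound hm.aestronglyMeasurable (L ^ 2)
      (Filter.Eventually.of_forall (ceq_bound hb n i))
  apply ae_eq_condExp_of_forall_setIntegral_eq (Fi_le i)
  · exact cw_integrable hb (by fun_prop)
  · intro s _ _
    exact hqint.integrableOn
  · intro s hs _
    obtain ⟨s', hs', rfl⟩ := hs
    have hms := measurable_upd0 i hs'
    rw [← integral_indicator hms, ← integral_indicator hms, cw_integral hb, cw_integral hb]
    congr 1
    have hw : Continuous fun x : Fin n → ℝ => Real.exp ((∑ i, x i) ^ 2 / (2 * n)) := by fun_prop
    have hI1 : Integrable (fun x => ((fun x : Fin n → ℝ => Function.update x i (0:ℝ)) ⁻¹' s').indicator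
        (ceq ρ n i) x * Real.exp ((∑ i, x i) ^ 2 / (2 * n))) (Measure.pi fun _ : Fin n => ρ) := by
      apply (aux_intn hb hw).bdd_mul (c := L ^ 2) (hm.indicator hms).aestronglyMeasurable
      refine Filter.Eventually.of_forall fun x => ?_
      exact (norm_indicator_le_norm_self _ _).trans (ceq_bound hb n i x)
    have hI2 : Integrable (fun x => ((fun x : Fin n → ℝ => Function.update x i (0:ℝ)) ⁻¹' s').indicator
        (fun y => (y i) ^ 2) x * Real.exp ((∑ i, x i) ^ 2 / (2 * n)))
        (Measure.pi fun _ : Fin n => ρ) := by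
      apply (aux_intn hb hw).bdd_mul (c := L ^ 2)
        ((by fun_prop : Measurable fun y : Fin n → ℝ => (y i) ^ 2).indicator hms).aestronglyMeasurable
      filter_upwards [aux_pi_bdd hb n] with x hx
      refine (norm_indicator_le_norm_self _ _).trans ?_
      rw [norm_pow, Real.norm_eq_abs]
      exact pow_le_pow_left₀ (abs_nonneg _) (hx i) 2
    rw [aux_fubini ρ i hI1, aux_fubini ρ i hI2]
    congr 1
    ext x
    by_cases hx : Function.update x i 0 ∈ s'
    · have e1 : ∀ (g : (Fin n → ℝ) → ℝ) (y : ℝ),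
          ((fun x : Fin n → ℝ => Function.update x i (0:ℝ)) ⁻¹' s').indicator g
            (Function.update x i y) = g (Function.update x i y) := by
        intro g y
        apply Set.indicator_of_mem
        simpa using hx
      obtain ⟨T, hT⟩ : ∃ T : ℝ, T = ∑ l, Function.update x i 0 l := ⟨_, rfl⟩
      have e0 : ∀ y : ℝ, ∑ l, Function.update x i y l = T + y := by
        intro y; rw [hT]; exact sum_update i x y
      simp_rw [e1, e0, Function.update_self]
      rw [hT]
      have e2 : ∀ y, ceq ρ n i (Function.update x i y) = ceq ρ n i x := by
        intro y; unfold ceq; simp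
      simp_rw [e2]
      rw [integral_const_mul]
      have e3 : ∫ y, Real.exp (((∑ l, Function.update x i 0 l) + y) ^ 2 / (2 * n)) ∂ρ
        = siteNum ρ n (fun _ => 1) (∑ l, Function.update x i 0 l) := by
        unfold siteNum; simp
      rw [e3]
      unfold ceq
      rw [div_mul_cancel₀ _ (den_pos hb n _).ne']
      rfl
    · have e1 : ∀ (g : (Fin n → ℝ) → ℝ) (y : ℝ),
          ((fun x : Fin n → ℝ => Function.update x i (0:ℝ)) ⁻¹' s').indicator g
            (Function.update x i y) = 0 := by
        intro g y
        apply Set.indicator_of_notMem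
        simpa using hx
      simp_rw [e1]
  · exact ((ceq_meas n i).stronglyMeasurable).aestronglyMeasurable

lemma ceq_close {ρ : Measure ℝ} [IsProbabilityMeasure ρ] {L : ℝ}
    (hb : ∀ᵐ x ∂ρ, |x| ≤ L) (hsym : ρ.map (fun x => -x) = ρ)
    (hvar : (∫ x, x ^ 2 ∂ρ) = 1) :
    ∃ C : ℝ, 0 < C ∧ ∀ n : ℕ, 1 ≤ n → ∀ i : Fin n, ∀ x : Fin n → ℝ, (∀ l, |x l| ≤ L) →
      |ceq ρ n i x - 1| ≤ C * (((∑ l, x l) / n) ^ 2 + 1 / n) := by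
  obtain ⟨C, hC, hsite⟩ := aux_site hb hsym hvar L
  have hL := aux_L_ge hb hvar
  refine ⟨C * (1 + 2 * L ^ 2) + 2 * C, by positivity, ?_⟩
  intro n hn i x hx
  have hn0 : (0:ℝ) < n := by exact_mod_cast hn
  have hn1 : (1:ℝ) ≤ n := by exact_mod_cast hn
  unfold ceq
  set T := ∑ l, Function.update x i 0 l with hT
  have hTS : T = (∑ l, x l) - x i := by
    have := sum_update i x (x i)
    rw [Function.update_eq_self] at this
    linarith
  have hTabs : |T / n| ≤ L := by
    rw [abs_div, abs_of_pos hn0, div_le_iff₀ hn0]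
    calc |T| ≤ ∑ l, |Function.update x i 0 l| := Finset.abs_sum_le_sum_abs _ _
      _ ≤ ∑ l : Fin n, L := by
        apply Finset.sum_le_sum
        intro l _
        by_cases h : l = i
        · rw [h, Function.update_self, abs_zero]; linarith
        · rw [Function.update_of_ne h]; exact hx l
      _ = L * n := by simp; ring
  have hd := den_pos hb n T
  have hq1 : 1 / (2 * (n:ℝ)) ≤ 1 := by rw [div_le_one (by positivity)]; linarith
  have h1 := hsite (1 / (2 * n)) (T / n) (by positivity) hq1 hTabs
  have h2 := aux_mgf_ge hb hsym (1 / (2 * n)) (T / n) (by positivity)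
  have e : siteNum ρ n (fun y => y ^ 2) T / siteNum ρ n (fun _ => 1) T - 1 =
      (∫ x, (x ^ 2 - 1) * Real.exp ((1 / (2 * n)) * x ^ 2 + (T / n) * x) ∂ρ) /
        ∫ x, Real.exp ((1 / (2 * n)) * x ^ 2 + (T / n) * x) ∂ρ := by
    rw [siteNum_eq ρ _ T hn, siteNum_eq ρ _ T hn, mul_div_mul_left _ _ (Real.exp_pos _).ne']
    simp only [sub_mul, one_mul]
    rw [integral_sub (aux_int1 hb (by fun_prop)) (aux_int1 hb (by fun_prop)), sub_div, div_self]
    linarith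
  rw [e, abs_div, abs_of_pos (by linarith : 0 < ∫ x, Real.exp ((1 / (2 * n)) * x ^ 2 + (T / n) * x) ∂ρ)]
  refine (div_le_self (abs_nonneg _) h2).trans (h1.trans ?_)
  set u := (∑ l, x l) / n with hu
  have hm : T / n = u - x i / n := by rw [hTS, hu]; ring
  have h3 : (T / n) ^ 2 ≤ 2 * u ^ 2 + 2 * L ^ 2 * (1 / n) := by
    rw [hm]
    have a1 : (x i / n) ^ 2 ≤ L ^ 2 * (1 / n) := by
      rw [div_pow]
      have : x i ^ 2 ≤ L ^ 2 := by
        rw [← sq_abs]; exact pow_le_pow_left₀ (abs_nonneg _) (hx i) 2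
      rw [mul_one_div]
      apply div_le_div₀ (by positivity) this hn0
      nlinarith
    nlinarith [sq_nonneg (u + x i / n)]
  have h4 : 1 / (2 * (n:ℝ)) ≤ 1 / n := by
    apply one_div_le_one_div_of_le hn0; linarith
  have h5 : 0 < 1 / (n:ℝ) := by positivity
  calc _ ≤ C * (1 / n + (2 * u ^ 2 + 2 * L ^ 2 * (1 / n))) := by gcongr
    _ ≤ _ := by
      have : 0 ≤ C * (1 + 2 * L ^ 2) * u ^ 2 := by positivity
      have : 0 ≤ C * (1 / (n:ℝ)) := by positivity
      nlinarith

end Aux4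

section Aux5

lemma swap_kernel {ρ : Measure ℝ} [IsProbabilityMeasure ρ] {L : ℝ}
    (hb : ∀ᵐ x ∂ρ, |x| ≤ L) {n : ℕ} (hn : 1 ≤ n) {f : (Fin n → ℝ) → ℝ} (hf : Continuous f)
    (a σ : ℝ) (m : ℕ) :
    Integrable (fun x : Fin n → ℝ => f x * ∫ v in Set.Icc (-L) L,
        Real.exp (n * (Phi a σ m v + Phid a σ m v * ((∑ l, x l) / n - v))))
        (Measure.pi fun _ : Fin n => ρ) ∧
    ∫ x : Fin n → ℝ, f x * (∫ v in Set.Icc (-L) L,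
        Real.exp (n * (Phi a σ m v + Phid a σ m v * ((∑ l, x l) / n - v))))
        ∂(Measure.pi fun _ : Fin n => ρ)
      = ∫ v in Set.Icc (-L) L, Real.exp (n * (Phi a σ m v - v * Phid a σ m v)) *
        ∫ x : Fin n → ℝ, f x * Real.exp (Phid a σ m v * ∑ l, x l)
          ∂(Measure.pi fun _ : Fin n => ρ) := by
  have c1 := Phi_continuous a σ m
  have c2 := Phid_continuous a σ m
  have hc : Continuous (fun p : (Fin n → ℝ) × ℝ => f p.1 *
      Real.exp (n * (Phi a σ m p.2 + Phid a σ m p.2 * ((∑ l, p.1 l) / n - p.2)))) := by fun_prop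
  have hI := aux_intnv hb hc
  simp_rw [← integral_const_mul]
  refine ⟨hI.integral_prod_left, ?_⟩
  rw [integral_integral_swap (f := fun (x : Fin n → ℝ) (v : ℝ) => f x *
      Real.exp (n * (Phi a σ m v + Phid a σ m v * ((∑ l, x l) / n - v)))) hI]
  congr 1
  ext v
  congr 1
  ext x
  rw [mul_left_comm, ← Real.exp_add]
  congr 2
  have : (n:ℝ) ≠ 0 := by positivity
  field_simp
  ring

lemma transfer {ρ : Measure ℝ} [IsProbabilityMeasure ρ] {L : ℝ} {k : ℕ}
    (hb : ∀ᵐ x ∂ρ, |x| ≤ L) (hsym : ρ.map (fun x => -x) = ρ)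
    (hvar : (∫ x, x ^ 2 ∂ρ) = 1)
    (hroot : ∀ s : ℝ, deriv (hfun ρ) s = 0 ↔ s = 0)
    (hk : 2 ≤ k)
    (hder : ∀ i : ℕ, i ≤ 2 * k - 1 → iteratedDeriv i (hfun ρ) 0 = 0)
    (hpos : 0 < iteratedDeriv (2 * k) (hfun ρ) 0) {a : ℝ} (ha : 0 ≤ a) :
    ∃ C : ℝ, 0 < C ∧ ∀ n : ℕ, 1 ≤ n → ∀ r σ A D : ℝ, 0 < r → r ≤ 1 → n * r ^ (2 * k) = 1 →
      0 ≤ σ → 0 ≤ A → 0 ≤ D → ∀ f : (Fin n → ℝ) → ℝ, Continuous f → (∀ x, 0 ≤ f x) →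
      (∀ t : ℝ, |t| ≤ (1 + a * (2 * k : ℕ) * L ^ (2 * k)) * L →
        ∫ x : Fin n → ℝ, f x * Real.exp (t * ∑ l, x l) ∂(Measure.pi fun _ : Fin n => ρ)
          ≤ (∫ x, Real.exp (t * x) ∂ρ) ^ n * (A + D * t ^ 4)) →
      ∫ x : Fin n → ℝ, f x * Real.exp (n * Phi a σ (2 * k) ((∑ l, x l) / n))
          ∂(Measure.pi fun _ : Fin n => ρ)
        ≤ C * (A + D * (r ^ 4 + σ ^ 4)) *
          ∫ x : Fin n → ℝ, Real.exp (n * Phi a σ (2 * k) ((∑ l, x l) / n))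
            ∂(Measure.pi fun _ : Fin n => ρ) := by
  have hL := aux_L_ge hb hvar
  set m := 2 * k with hm
  set K := 1 + a * (m : ℕ) * L ^ m with hK
  have hKpos : 0 < K := by positivity
  have hcd := aux_h_contDiff hb
  have hcont : Continuous (hfun ρ) := (hcd 0).continuous
  obtain ⟨c, C2, hc, hC2, hh⟩ := aux_h_bounds hcd (by omega) hroot hder hpos (K * L)
  obtain ⟨C1, hC1, hmom⟩ := Psi_moment hcont ha hL hc hC2 (m := m) (by omega)
    (by rw [hm]; exact even_two_mul k) hh
  obtain ⟨c0, hc0, hker⟩ := kernel_compare ha hL (m - 2) (by omega)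
  rw [show m - 2 + 2 = m by omega] at hker
  refine ⟨(c0⁻¹ * √(2 * π)) * (1 + K ^ 4 * C1), by positivity, ?_⟩
  intro n hn r σ A D hr hr1 hnr hσ hA hD f hf hf0 hft
  have hn0 : (0:ℝ) < n := by exact_mod_cast hn
  have hn1 : (1:ℝ) ≤ n := by exact_mod_cast hn
  set μ := Measure.pi fun _ : Fin n => ρ with hμ
  have cP := Phi_continuous a σ m
  have cPd := Phid_continuous a σ m
  have cPsi := Psi_continuous hcont a σ m
  have hub : ∀ᵐ x ∂μ, |(∑ l, x l) / (n:ℝ)| ≤ L := by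
    filter_upwards [aux_pi_bdd hb n] with x hx
    rw [abs_div, abs_of_pos hn0, div_le_iff₀ hn0]
    calc |∑ l, x l| ≤ ∑ l, |x l| := Finset.abs_sum_le_sum_abs _ _
      _ ≤ ∑ l : Fin n, L := Finset.sum_le_sum fun l _ => hx l
      _ = L * n := by simp; ring
  have hMeq : ∀ t : ℝ, (∫ x, Real.exp (t * x) ∂ρ) = Real.exp (t ^ 2 / 2 - hfun ρ t) := by
    intro t
    apply aux_mgf_eq
    simpa using aux_mgf_ge hb hsym 0 t le_rfl
  have hPsi : ∀ v, Real.exp (n * (Phi a σ m v - v * Phid a σ m v)) *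
      (∫ x, Real.exp (Phid a σ m v * x) ∂ρ) ^ n = Real.exp (n * Psi (hfun ρ) a σ m v) := by
    intro v
    rw [hMeq, ← Real.exp_nat_mul, ← Real.exp_add]
    congr 1
    unfold Psi; ring
  obtain ⟨hI1, hS1⟩ := swap_kernel hb hn hf a σ m
  obtain ⟨hI2, hS2⟩ := swap_kernel hb hn (f := fun _ => (1:ℝ)) continuous_const a σ m
  simp only [one_mul] at hI2 hS2
  set J := ∫ v in Set.Icc (-L) L, Real.exp (n * Psi (hfun ρ) a σ m v) with hJ
  simp_rw [aux_mgf_pow, hPsi] at hS2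
  rw [← hJ] at hS2
  have hJ0 : 0 ≤ J := integral_nonneg fun v => (Real.exp_pos _).le
  set ker : (Fin n → ℝ) → ℝ := fun x => ∫ v in Set.Icc (-L) L,
        Real.exp (n * (Phi a σ m v + Phid a σ m v * ((∑ l, x l) / n - v))) with hkerdef
  set E := ∫ x : Fin n → ℝ, Real.exp (n * Phi a σ m ((∑ l, x l) / n)) ∂μ with hE
  -- denominators
  have hden : √n * J ≤ √(2 * π) * E := by
    rw [← hS2, hE, ← integral_const_mul, ← integral_const_mul]
    apply integral_mono_ae (hI2.const_mul _) (aux_intn hb (by fun_prop))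
    filter_upwards [hub] with x hx
    exact (hker σ hσ n hn1 _ hx).2
  -- numerators
  have hnum : c0 * ∫ x : Fin n → ℝ, f x * Real.exp (n * Phi a σ m ((∑ l, x l) / n)) ∂μ
      ≤ √n * ∫ x, f x * ker x ∂μ := by
    rw [← integral_const_mul, ← integral_const_mul]
    apply integral_mono_ae (aux_intn hb (by fun_prop)) (hI1.const_mul _)
    filter_upwards [hub] with x hx
    have h1 := (hker σ hσ n hn1 _ hx).1
    have h2 := mul_le_mul_of_nonneg_left h1 (hf0 x)
    linarith
  have hmid : ∫ x, f x * ker x ∂μ ≤ (1 + K ^ 4 * C1) * (A + D * (r ^ 4 + σ ^ 4)) * J := by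
    rw [hS1]
    have hi1 : IntegrableOn (fun v => Real.exp (n * Psi (hfun ρ) a σ m v)) (Set.Icc (-L) L) :=
      (by fun_prop : Continuous fun v => Real.exp (n * Psi (hfun ρ) a σ m v)).integrableOn_Icc
    have hi2 : IntegrableOn (fun v => v ^ 4 * Real.exp (n * Psi (hfun ρ) a σ m v)) (Set.Icc (-L) L) :=
      (by fun_prop : Continuous fun v => v ^ 4 * Real.exp (n * Psi (hfun ρ) a σ m v)).integrableOn_Icc
    have h1 : ∫ v in Set.Icc (-L) L, Real.exp (n * (Phi a σ m v - v * Phid a σ m v)) *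
        ∫ x : Fin n → ℝ, f x * Real.exp (Phid a σ m v * ∑ l, x l) ∂μ
        ≤ ∫ v in Set.Icc (-L) L, (A * Real.exp (n * Psi (hfun ρ) a σ m v) +
            D * K ^ 4 * (v ^ 4 * Real.exp (n * Psi (hfun ρ) a σ m v))) := by
      apply integral_mono_of_nonneg
      · refine Filter.Eventually.of_forall fun v => ?_
        apply mul_nonneg (Real.exp_pos _).le
        exact integral_nonneg fun x => mul_nonneg (hf0 x) (Real.exp_pos _).le
      · exact (hi1.const_mul _).add (hi2.const_mul _)
      · filter_upwards [ae_restrict_mem measurableSet_Icc] with v hv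
        have hvL : |v| ≤ L := abs_le.2 hv
        have ht := Phid_abs ha hσ hL (by omega : 2 ≤ m) hvL
        have ht2 : |Phid a σ m v| ≤ K * L := ht.trans (by gcongr)
        have h2 := hft _ ht2
        have h3 : (Phid a σ m v) ^ 4 ≤ K ^ 4 * v ^ 4 := by
          rw [← (show Even 4 by decide).pow_abs (Phid a σ m v), ← (show Even 4 by decide).pow_abs v,
            ← mul_pow]
          exact pow_le_pow_left₀ (abs_nonneg _) ht 4
        have h4 := mul_le_mul_of_nonneg_left h2
          (Real.exp_pos (n * (Phi a σ m v - v * Phid a σ m v))).le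
        rw [← mul_assoc, hPsi] at h4
        refine h4.trans ?_
        have h5 : A + D * (Phid a σ m v) ^ 4 ≤ A + D * (K ^ 4 * v ^ 4) := by gcongr
        have h6 := mul_le_mul_of_nonneg_left h5 (Real.exp_pos (n * Psi (hfun ρ) a σ m v)).le
        linarith
    rw [integral_add (hi1.const_mul _) (hi2.const_mul _), integral_const_mul, integral_const_mul] at h1
    have h2 := hmom n r σ hn0 hr hr1 hnr hσ
    have h3 : D * K ^ 4 * ∫ v in Set.Icc (-L) L, v ^ 4 * Real.exp (n * Psi (hfun ρ) a σ m v)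
        ≤ D * K ^ 4 * (C1 * (r ^ 4 + σ ^ 4) * J) := by gcongr
    refine h1.trans ?_
    have g1 : 0 ≤ K ^ 4 * C1 * A * J := by positivity
    have g2 : 0 ≤ D * (r ^ 4 + σ ^ 4) * J := by positivity
    rw [← hJ]
    nlinarith
  have hsn : 0 ≤ √(n:ℝ) := Real.sqrt_nonneg _
  have hX : 0 ≤ (1 + K ^ 4 * C1) * (A + D * (r ^ 4 + σ ^ 4)) := by positivity
  have hfin : c0 * ∫ x : Fin n → ℝ, f x * Real.exp (n * Phi a σ m ((∑ l, x l) / n)) ∂μ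
      ≤ (1 + K ^ 4 * C1) * (A + D * (r ^ 4 + σ ^ 4)) * (√(2 * π) * E) := by
    have g1 := mul_le_mul_of_nonneg_left hmid hsn
    have g2 := mul_le_mul_of_nonneg_left hden hX
    linarith
  rw [← le_div_iff₀' hc0] at hfin
  refine hfin.trans (le_of_eq ?_)
  field_simp

lemma zeta_eq (G : ℝ → ℝ) (a s : ℝ) (k : ℕ) (hk : 1 ≤ k) (hG : ∀ w, G w = a * w ^ (2 * k))
    (hs : 0 < s) (w : ℝ) : zeta G s w = Real.exp (a * ppd s (2 * k) w) := by
  unfold zeta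
  split_ifs with h1 h2
  · rw [ppd_neg hs.le (by omega) h1.le]; simp
  · push Not at h1
    unfold ppd
    rw [max_eq_left h1, max_eq_right (by linarith), hG, zero_pow (by omega), sub_zero]
  · push Not at h1 h2
    unfold ppd
    rw [max_eq_left h1, max_eq_left (by linarith), hG, hG, mul_sub]

lemma ppd_scale {r : ℝ} (hr : 0 < r) (s u : ℝ) (m : ℕ) :
    ppd s m (u / r) = ppd (s * r) m u / r ^ m := by
  unfold ppd
  rw [sub_div, ← div_pow, ← div_pow]
  congr 2
  · rw [← max_div_div_right hr.le, zero_div]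
  · rw [← max_div_div_right hr.le, zero_div, sub_div, mul_div_cancel_right₀ _ hr.ne']

end Aux5

section Aux6

lemma small_rn {n k : ℕ} (hn : 1 ≤ n) (hk : 2 ≤ k) {r : ℝ} (hr : 0 < r) (hr1 : r ≤ 1)
    (hnr : n * r ^ (2 * k) = 1) : 1 / (n : ℝ) ≤ r ^ 4 := by
  have hn0 : (0:ℝ) < n := by exact_mod_cast hn
  have h1 : 1 / (n : ℝ) = r ^ (2 * k) := by
    rw [div_eq_iff hn0.ne']; linarith
  rw [h1]
  exact pow_le_pow_of_le_one hr.le hr1 (by omega)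

lemma boundB {ρ : Measure ℝ} [IsProbabilityMeasure ρ] {L : ℝ} {k : ℕ}
    (hb : ∀ᵐ x ∂ρ, |x| ≤ L) (hsym : ρ.map (fun x => -x) = ρ)
    (hvar : (∫ x, x ^ 2 ∂ρ) = 1)
    (hroot : ∀ s : ℝ, deriv (hfun ρ) s = 0 ↔ s = 0)
    (hk : 2 ≤ k)
    (hder : ∀ i : ℕ, i ≤ 2 * k - 1 → iteratedDeriv i (hfun ρ) 0 = 0)
    (hpos : 0 < iteratedDeriv (2 * k) (hfun ρ) 0) {a : ℝ} (ha : 0 ≤ a) :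
    ∃ C : ℝ, 0 < C ∧ ∀ n : ℕ, 1 ≤ n → ∀ r σ : ℝ, 0 < r → r ≤ 1 → n * r ^ (2 * k) = 1 →
      0 ≤ σ →
      ∫ x : Fin n → ℝ, ((1 / (n : ℝ)) * ∑ i, ((x i) ^ 2 - 1)) ^ 2 *
          Real.exp (n * Phi a σ (2 * k) ((∑ l, x l) / n)) ∂(Measure.pi fun _ : Fin n => ρ)
        ≤ C * (r ^ 2 + σ ^ 2) ^ 2 *
          ∫ x : Fin n → ℝ, Real.exp (n * Phi a σ (2 * k) ((∑ l, x l) / n))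
            ∂(Measure.pi fun _ : Fin n => ρ) := by
  obtain ⟨C, hC, htr⟩ := transfer hb hsym hvar hroot hk hder hpos ha
  have hL := aux_L_ge hb hvar
  obtain ⟨C2, hC2, hsite⟩ := aux_site hb hsym hvar ((1 + a * (2 * k : ℕ) * L ^ (2 * k)) * L)
  refine ⟨C * ((L ^ 2 + 1) ^ 2 + C2 ^ 2), by positivity, ?_⟩
  intro n hn r σ hr hr1 hnr hσ
  have hn0 : (0:ℝ) < n := by exact_mod_cast hn
  have hE : 0 ≤ ∫ x : Fin n → ℝ, Real.exp (n * Phi a σ (2 * k) ((∑ l, x l) / n))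
            ∂(Measure.pi fun _ : Fin n => ρ) := integral_nonneg fun x => (Real.exp_pos _).le
  refine (htr n hn r σ ((L ^ 2 + 1) ^ 2 / n) (C2 ^ 2) hr hr1 hnr hσ (by positivity) (by positivity)
    (fun x => ((1 / (n : ℝ)) * ∑ i, ((x i) ^ 2 - 1)) ^ 2) (by fun_prop)
    (fun x => sq_nonneg _) ?_).trans ?_
  · intro t ht
    have hM : 1 ≤ ∫ x, Real.exp (t * x) ∂ρ := by
      simpa using aux_mgf_ge hb hsym 0 t le_rfl
    have h1 := aux_sum_sq (n := n) hb (fun x => x ^ 2 - 1) (by fun_prop) ((L ^ 2 + 1) ^ 2) (by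
      intro x hx
      have h0 : x ^ 2 ≤ L ^ 2 := by
        rw [← sq_abs]; exact pow_le_pow_left₀ (abs_nonneg _) hx 2
      have := sq_nonneg x
      nlinarith) t hM
    have h2 : |∫ x, (x ^ 2 - 1) * Real.exp (t * x) ∂ρ| ≤ C2 * t ^ 2 := by
      simpa using hsite 0 t le_rfl zero_le_one ht
    have h3 : (∫ x, (x ^ 2 - 1) * Real.exp (t * x) ∂ρ) ^ 2 ≤ C2 ^ 2 * t ^ 4 := by
      rw [← sq_abs]
      calc _ ≤ (C2 * t ^ 2) ^ 2 := pow_le_pow_left₀ (abs_nonneg _) h2 2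
        _ = _ := by ring
    have e : ∀ x : Fin n → ℝ, ((1 / (n : ℝ)) * ∑ i, ((x i) ^ 2 - 1)) ^ 2 *
        Real.exp (t * ∑ l, x l) = (1 / (n : ℝ)) ^ 2 * ((∑ i, ((x i) ^ 2 - 1)) ^ 2 *
        Real.exp (t * ∑ l, x l)) := fun x => by ring
    simp_rw [e]
    rw [integral_const_mul]
    have hMn : 0 ≤ (∫ x, Real.exp (t * x) ∂ρ) ^ n := by positivity
    calc _ ≤ (1 / (n : ℝ)) ^ 2 * ((∫ x, Real.exp (t * x) ∂ρ) ^ n *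
        (n * (L ^ 2 + 1) ^ 2 + n ^ 2 * (∫ x, (x ^ 2 - 1) * Real.exp (t * x) ∂ρ) ^ 2)) :=
          mul_le_mul_of_nonneg_left h1 (by positivity)
      _ = (∫ x, Real.exp (t * x) ∂ρ) ^ n * ((L ^ 2 + 1) ^ 2 / n +
          (∫ x, (x ^ 2 - 1) * Real.exp (t * x) ∂ρ) ^ 2) := by field_simp
      _ ≤ _ := mul_le_mul_of_nonneg_left (by linarith) hMn
  · apply mul_le_mul_of_nonneg_right _ hE
    rw [mul_assoc]
    apply mul_le_mul_of_nonneg_left _ hC.le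
    have h4 := small_rn hn hk hr hr1 hnr
    have h5 : r ^ 4 + σ ^ 4 ≤ (r ^ 2 + σ ^ 2) ^ 2 := by
      have : 0 ≤ r ^ 2 * σ ^ 2 := by positivity
      nlinarith
    have h6 : 0 ≤ σ ^ 4 := by positivity
    have h7 : (L ^ 2 + 1) ^ 2 / n ≤ (L ^ 2 + 1) ^ 2 * (r ^ 2 + σ ^ 2) ^ 2 := by
      rw [div_eq_mul_one_div]
      exact mul_le_mul_of_nonneg_left (by linarith) (by positivity)
    have h8 := mul_le_mul_of_nonneg_left h5 (sq_nonneg C2)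
    linarith

lemma boundU {ρ : Measure ℝ} [IsProbabilityMeasure ρ] {L : ℝ} {k : ℕ}
    (hb : ∀ᵐ x ∂ρ, |x| ≤ L) (hsym : ρ.map (fun x => -x) = ρ)
    (hvar : (∫ x, x ^ 2 ∂ρ) = 1)
    (hroot : ∀ s : ℝ, deriv (hfun ρ) s = 0 ↔ s = 0)
    (hk : 2 ≤ k)
    (hder : ∀ i : ℕ, i ≤ 2 * k - 1 → iteratedDeriv i (hfun ρ) 0 = 0)
    (hpos : 0 < iteratedDeriv (2 * k) (hfun ρ) 0) {a : ℝ} (ha : 0 ≤ a) :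
    ∃ C : ℝ, 0 < C ∧ ∀ n : ℕ, 1 ≤ n → ∀ r σ : ℝ, 0 < r → r ≤ 1 → n * r ^ (2 * k) = 1 →
      0 ≤ σ →
      ∫ x : Fin n → ℝ, ((∑ i, x i) / n) ^ 2 *
          Real.exp (n * Phi a σ (2 * k) ((∑ l, x l) / n)) ∂(Measure.pi fun _ : Fin n => ρ)
        ≤ C * (r ^ 2 + σ ^ 2) *
          ∫ x : Fin n → ℝ, Real.exp (n * Phi a σ (2 * k) ((∑ l, x l) / n))
            ∂(Measure.pi fun _ : Fin n => ρ) := by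
  obtain ⟨C, hC, htr⟩ := transfer hb hsym hvar hroot hk hder hpos ha
  have hL := aux_L_ge hb hvar
  obtain ⟨C2, hC2, hsite⟩ := aux_site1 hb hsym hL ((1 + a * (2 * k : ℕ) * L ^ (2 * k)) * L)
  refine ⟨C * (L ^ 2 + 2 * C2 ^ 2), by positivity, ?_⟩
  intro n hn r σ hr hr1 hnr hσ
  have hn0 : (0:ℝ) < n := by exact_mod_cast hn
  have hE : 0 ≤ ∫ x : Fin n → ℝ, Real.exp (n * Phi a σ (2 * k) ((∑ l, x l) / n))
            ∂(Measure.pi fun _ : Fin n => ρ) := integral_nonneg fun x => (Real.exp_pos _).le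
  have hε : 0 < r ^ 2 + σ ^ 2 := by positivity
  obtain ⟨ε, hεd⟩ : ∃ ε, ε = r ^ 2 + σ ^ 2 := ⟨_, rfl⟩
  rw [← hεd] at hε ⊢
  refine (htr n hn r σ (L ^ 2 / n + C2 ^ 2 * ε) (C2 ^ 2 / ε) hr hr1 hnr hσ (by positivity)
    (by positivity)
    (fun x => ((∑ i, x i) / n) ^ 2) (by fun_prop)
    (fun x => sq_nonneg _) ?_).trans ?_
  · intro t ht
    have hM : 1 ≤ ∫ x, Real.exp (t * x) ∂ρ := by
      simpa using aux_mgf_ge hb hsym 0 t le_rfl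
    have h1 := aux_sum_sq (n := n) hb (fun x => x) (by fun_prop) (L ^ 2) (by
      intro x hx
      change x ^ 2 ≤ L ^ 2
      rw [← sq_abs]; exact pow_le_pow_left₀ (abs_nonneg _) hx 2) t hM
    have h2 : |∫ x, x * Real.exp (t * x) ∂ρ| ≤ C2 * |t| := hsite t ht
    have h3 : (∫ x, x * Real.exp (t * x) ∂ρ) ^ 2 ≤ C2 ^ 2 * t ^ 2 := by
      rw [← sq_abs]
      calc _ ≤ (C2 * |t|) ^ 2 := pow_le_pow_left₀ (abs_nonneg _) h2 2
        _ = _ := by rw [mul_pow, sq_abs]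
    have h4 : t ^ 2 ≤ ε + t ^ 4 / ε := by
      rw [← sub_nonneg]
      have : ε + t ^ 4 / ε - t ^ 2 = ((t ^ 2 - ε) ^ 2 + t ^ 2 * ε) / ε := by
        field_simp; ring
      rw [this]; positivity
    have h5 := mul_le_mul_of_nonneg_left h4 (sq_nonneg C2)
    have h6 : C2 ^ 2 * (ε + t ^ 4 / ε) = C2 ^ 2 * ε + C2 ^ 2 / ε * t ^ 4 := by ring
    have e : ∀ x : Fin n → ℝ, ((∑ i, x i) / n) ^ 2 *
        Real.exp (t * ∑ l, x l) = (1 / (n : ℝ)) ^ 2 * ((∑ i, x i) ^ 2 *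
        Real.exp (t * ∑ l, x l)) := fun x => by ring
    simp_rw [e]
    rw [integral_const_mul]
    have hMn : 0 ≤ (∫ x, Real.exp (t * x) ∂ρ) ^ n := by positivity
    calc _ ≤ (1 / (n : ℝ)) ^ 2 * ((∫ x, Real.exp (t * x) ∂ρ) ^ n *
        (n * L ^ 2 + n ^ 2 * (∫ x, x * Real.exp (t * x) ∂ρ) ^ 2)) :=
          mul_le_mul_of_nonneg_left h1 (by positivity)
      _ = (∫ x, Real.exp (t * x) ∂ρ) ^ n * (L ^ 2 / n +
          (∫ x, x * Real.exp (t * x) ∂ρ) ^ 2) := by field_simp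
      _ ≤ _ := mul_le_mul_of_nonneg_left (by linarith) hMn
  · apply mul_le_mul_of_nonneg_right _ hE
    rw [mul_assoc]
    apply mul_le_mul_of_nonneg_left _ hC.le
    have h4 := small_rn hn hk hr hr1 hnr
    have h5 : r ^ 4 + σ ^ 4 ≤ ε ^ 2 := by
      have : 0 ≤ r ^ 2 * σ ^ 2 := by positivity
      rw [hεd]; nlinarith
    have h6 : r ^ 4 ≤ r ^ 2 := pow_le_pow_of_le_one hr.le hr1 (by norm_num)
    have h9 : 1 / (n:ℝ) ≤ ε := by rw [hεd]; nlinarith [sq_nonneg σ]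
    have h7 : L ^ 2 / n ≤ L ^ 2 * ε := by
      rw [div_eq_mul_one_div]
      exact mul_le_mul_of_nonneg_left h9 (by positivity)
    have h8 : C2 ^ 2 / ε * (r ^ 4 + σ ^ 4) ≤ C2 ^ 2 * ε := by
      calc _ ≤ C2 ^ 2 / ε * ε ^ 2 := mul_le_mul_of_nonneg_left h5 (by positivity)
        _ = _ := by field_simp
    linarith

lemma weight_eq {n k : ℕ} (hn : 1 ≤ n) (hk : 2 ≤ k) (ρ : Measure ℝ) {s : ℝ} (hs : 0 < s)
    {r : ℝ} (hrd : r = (n : ℝ) ^ (-(1 / (2 * (k : ℝ))))) (hr : 0 < r)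
    (hnr : n * r ^ (2 * k) = 1) (x : Fin n → ℝ) :
    zeta (cwG ρ k) s (cwW n k x) * Real.exp ((∑ i, x i) ^ 2 / (2 * n)) =
      Real.exp (n * Phi (iteratedDeriv (2 * k) (hfun ρ) 0 / Nat.factorial (2 * k)) (s * r) (2 * k)
        ((∑ l, x l) / n)) := by
  have hn0 : (0:ℝ) < n := by exact_mod_cast hn
  have hW : cwW n k x = ((∑ l, x l) / n) / r := by
    unfold cwW
    rw [Real.rpow_add hn0, hrd, Real.rpow_neg hn0.le, Real.rpow_one, Real.rpow_neg hn0.le]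
    field_simp
  have hr2 : 1 / r ^ (2 * k) = n := by
    rw [div_eq_iff (by positivity)]; linarith
  rw [zeta_eq (cwG ρ k) (iteratedDeriv (2 * k) (hfun ρ) 0 / Nat.factorial (2 * k)) s k (by omega)
    (fun w => by unfold cwG; ring) hs, hW, ppd_scale hr, ← Real.exp_add]
  congr 1
  rw [div_eq_mul_one_div (ppd _ _ _), hr2]
  unfold Phi
  field_simp
  ring

end Aux6

theorem stmt_18 (ρ : Measure ℝ) [IsProbabilityMeasure ρ] (L : ℝ) (k : ℕ)
    (hsym : ρ.map (fun x => -x) = ρ)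
    (hvar : (∫ x, x ^ 2 ∂ρ) = 1)
    (hL : ρ (Set.Icc (-L) L) = 1)
    (hroot : ∀ s : ℝ, deriv (hfun ρ) s = 0 ↔ s = 0)
    (hk : 2 ≤ k)
    (hder : ∀ i : ℕ, i ≤ 2 * k - 1 → iteratedDeriv i (hfun ρ) 0 = 0)
    (hpos : 0 < iteratedDeriv (2 * k) (hfun ρ) 0)
    (d₀ d₁ α d₂ d₃ : ℝ)
    (hd₀ : 1 ≤ d₀) (hd₁ : 0 < d₁) (hα0 : 0 ≤ α) (hα1 : α < 1)
    (hd₂ : 0 ≤ d₂) (hd₃ : 0 < d₃) :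
    ∃ C : ℝ, 0 < C ∧ ∀ n : ℕ, 1 ≤ n →
      ∀ (Khat : (Fin n → ℝ) → ℝ → ℝ) (R : (Fin n → ℝ) → ℝ) (κ : ℝ),
        -- the exchangeable-pair Stein identity for `W` with
        -- `δ = 2L n^{−1+1/(2k)}` and `g(w) = h^{(2k)}(0) w^{2k−1}/(2k−1)!`
        (∀ x t, 0 ≤ Khat x t) →
        (∀ x t, 2 * L * (n : ℝ) ^ (-(1 : ℝ) + 1 / (2 * (k : ℝ))) < |t| → Khat x t = 0) →
        SteinIdentity (cwMeasure ρ n) (cwW n k) R Khat (cwg ρ k)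
          (2 * L * (n : ℝ) ^ (-(1 : ℝ) + 1 / (2 * (k : ℝ)))) →
        -- condition (2.8): `E(K̂₁ | W) ≤ d₀`
        (∀ᵐ x ∂cwMeasure ρ n,
          ((cwMeasure ρ n)[KhatOne Khat (2 * L * (n : ℝ) ^ (-(1 : ℝ) + 1 / (2 * (k : ℝ)))) |
              MeasurableSpace.comap (cwW n k) Real.measurableSpace]) x ≤ d₀) →
        -- condition (2.9): `δ |g(W)| ≤ d₁`
        (∀ᵐ x ∂cwMeasure ρ n,
          2 * L * (n : ℝ) ^ (-(1 : ℝ) + 1 / (2 * (k : ℝ))) * |cwg ρ k (cwW n k x)| ≤ d₁) →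
        -- condition (r2.2-a)
        (∀ᵐ x ∂cwMeasure ρ n,
          |R x| ≤ α * (|cwg ρ k (cwW n k x)| + 1)
            + d₂ * (if κ < |cwW n k x| then (1 : ℝ) else 0)) →
        -- condition (r2.2-b): `d₂ P(|W| > κ) ≤ d₃ e^{−2 s₀/(d₁ δ)}`
        (d₂ * ((cwMeasure ρ n) {x | κ < |cwW n k x|}).toReal
          ≤ d₃ * Real.exp (-2 * sSup {s : ℝ |
              2 * L * (n : ℝ) ^ (-(1 : ℝ) + 1 / (2 * (k : ℝ))) * s * cwg ρ k s ^ 2 ≤ 1} /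
            (d₁ * (2 * L * (n : ℝ) ^ (-(1 : ℝ) + 1 / (2 * (k : ℝ))))))) →
        ∀ s : ℝ, 0 < s →
          (∫ x, |(1 / (n : ℝ)) * ∑ i,
                ((x i) ^ 2 - ((cwMeasure ρ n)[fun y => (y i) ^ 2 | Fi n i]) x)|
              * zeta (cwG ρ k) s (cwW n k x) ∂cwMeasure ρ n)
            ≤ C * (n : ℝ) ^ (-(1 : ℝ) / (k : ℝ)) * (1 + |s| ^ 2)
              * ∫ x, zeta (cwG ρ k) s (cwW n k x) ∂cwMeasure ρ n := by
  have hb := aux_ae_bdd hL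
  have hL1 := aux_L_ge hb hvar
  obtain ⟨a, ha_def⟩ : ∃ a, a = iteratedDeriv (2 * k) (hfun ρ) 0 / Nat.factorial (2 * k) :=
    ⟨_, rfl⟩
  have ha : 0 ≤ a := by rw [ha_def]; positivity
  obtain ⟨CB, hCB, hB⟩ := boundB hb hsym hvar hroot hk hder hpos ha
  obtain ⟨CU, hCU, hU⟩ := boundU hb hsym hvar hroot hk hder hpos ha
  obtain ⟨C1, hC1, hclose⟩ := ceq_close hb hsym hvar
  refine ⟨1 + CB + C1 * (CU + 1), by positivity, ?_⟩
  intro n hn _ _ _ _ _ _ _ _ _ _ s hs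
  have hn0 : (0:ℝ) < n := by exact_mod_cast hn
  have hn1 : (1:ℝ) ≤ n := by exact_mod_cast hn
  have hk0 : (0:ℝ) < k := by exact_mod_cast (by omega : 0 < k)
  obtain ⟨r, hrd⟩ : ∃ r, r = (n : ℝ) ^ (-(1 / (2 * (k : ℝ)))) := ⟨_, rfl⟩
  have hr : 0 < r := by rw [hrd]; positivity
  have hr1 : r ≤ 1 := by
    rw [hrd]
    apply Real.rpow_le_one_of_one_le_of_nonpos hn1
    rw [neg_nonpos]; positivity
  have hnr : n * r ^ (2 * k) = 1 := by
    rw [hrd, ← Real.rpow_natCast, ← Real.rpow_mul hn0.le]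
    have : -(1 / (2 * (k : ℝ))) * ((2 * k : ℕ) : ℝ) = -1 := by
      push_cast; field_simp
    rw [this, Real.rpow_neg_one]
    field_simp
  have hr2 : (n : ℝ) ^ (-(1 : ℝ) / (k : ℝ)) = r ^ 2 := by
    rw [hrd, ← Real.rpow_natCast, ← Real.rpow_mul hn0.le]
    congr 1
    push_cast; field_simp
  have hσ : 0 ≤ s * r := by positivity
  have hw : ∀ x : Fin n → ℝ, zeta (cwG ρ k) s (cwW n k x) *
      Real.exp ((∑ i, x i) ^ 2 / (2 * n)) =
      Real.exp (n * Phi a (s * r) (2 * k) ((∑ l, x l) / n)) := by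
    intro x
    rw [ha_def]
    exact weight_eq hn hk ρ hs hrd hr hnr x
  have hzc : Continuous fun x : Fin n → ℝ => zeta (cwG ρ k) s (cwW n k x) := by
    have : (fun x : Fin n → ℝ => zeta (cwG ρ k) s (cwW n k x)) =
        fun x => Real.exp (a * ppd s (2 * k) (cwW n k x)) := by
      ext x
      exact zeta_eq (cwG ρ k) a s k (by omega) (fun w => by rw [ha_def]; unfold cwG; ring) hs _
    rw [this]
    have h1 := ppd_continuous s (2 * k)
    have h2 : Continuous (cwW n k) := by unfold cwW; fun_prop
    fun_prop
  have hz0 : ∀ x : Fin n → ℝ, 0 ≤ zeta (cwG ρ k) s (cwW n k x) := by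
    intro x
    rw [zeta_eq (cwG ρ k) a s k (by omega) (fun w => by rw [ha_def]; unfold cwG; ring) hs _]
    positivity
  have hB' := hB n hn r (s * r) hr hr1 hnr hσ
  have hU' := hU n hn r (s * r) hr hr1 hnr hσ
  obtain ⟨ε, hεd⟩ : ∃ ε, ε = r ^ 2 + (s * r) ^ 2 := ⟨_, rfl⟩
  have hε : 0 < ε := by rw [hεd]; positivity
  rw [← hεd] at hB' hU'
  have hnε : 1 / (n : ℝ) ≤ ε := by
    have h4 := small_rn hn hk hr hr1 hnr
    have h6 : r ^ 4 ≤ r ^ 2 := pow_le_pow_of_le_one hr.le hr1 (by norm_num)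
    rw [hεd]; nlinarith [sq_nonneg (s * r)]
  have hce : ∀ᵐ x ∂cwMeasure ρ n, ∀ i,
      ceq ρ n i x = ((cwMeasure ρ n)[fun y => (y i) ^ 2 | Fi n i]) x :=
    ae_all_iff.2 fun i => ceq_condExp hb n i
  have hbd : ∀ᵐ x ∂cwMeasure ρ n, ∀ i, |x i| ≤ L := (cw_ac ρ n).ae_le (aux_pi_bdd hb n)
  have hstep : (∫ x, |(1 / (n : ℝ)) * ∑ i,
        ((x i) ^ 2 - ((cwMeasure ρ n)[fun y => (y i) ^ 2 | Fi n i]) x)|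
        * zeta (cwG ρ k) s (cwW n k x) ∂cwMeasure ρ n) ≤
      ∫ x, (ε + (1 / ε) * ((1 / (n : ℝ)) * ∑ i, ((x i) ^ 2 - 1)) ^ 2 +
        C1 * (((∑ l, x l) / n) ^ 2 + ε)) * zeta (cwG ρ k) s (cwW n k x) ∂cwMeasure ρ n := by
    apply integral_mono_of_nonneg
    · exact Filter.Eventually.of_forall fun x => mul_nonneg (abs_nonneg _) (hz0 x)
    · exact cw_integrable hb (by fun_prop)
    filter_upwards [hce, hbd] with x hx hxb
    apply mul_le_mul_of_nonneg_right _ (hz0 x)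
    simp_rw [← hx]
    have hsplit : (1 / (n : ℝ)) * ∑ i, ((x i) ^ 2 - ceq ρ n i x) =
        (1 / (n : ℝ)) * ∑ i, ((x i) ^ 2 - 1) - (1 / (n : ℝ)) * ∑ i, (ceq ρ n i x - 1) := by
      rw [← mul_sub, ← Finset.sum_sub_distrib]
      congr 1
      apply Finset.sum_congr rfl
      intro i _
      ring
    have h1 : |(1 / (n : ℝ)) * ∑ i, (ceq ρ n i x - 1)| ≤
        C1 * (((∑ l, x l) / n) ^ 2 + ε) := by
      rw [abs_mul, abs_of_pos (by positivity : 0 < 1 / (n : ℝ))]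
      have h2 : |∑ i, (ceq ρ n i x - 1)| ≤ n * (C1 * (((∑ l, x l) / n) ^ 2 + 1 / n)) := by
        refine (Finset.abs_sum_le_sum_abs _ _).trans ?_
        refine (Finset.sum_le_card_nsmul _ _ _ (fun i _ => hclose n hn i x hxb)).trans ?_
        rw [Finset.card_univ, Fintype.card_fin, nsmul_eq_mul]
      calc _ ≤ 1 / (n : ℝ) * (n * (C1 * (((∑ l, x l) / n) ^ 2 + 1 / n))) :=
            mul_le_mul_of_nonneg_left h2 (by positivity)
        _ = C1 * (((∑ l, x l) / n) ^ 2 + 1 / n) := by field_simp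
        _ ≤ _ := mul_le_mul_of_nonneg_left (by linarith) hC1.le
    obtain ⟨B, hBd⟩ : ∃ B, B = (1 / (n : ℝ)) * ∑ i, ((x i) ^ 2 - 1) := ⟨_, rfl⟩
    rw [hsplit, ← hBd]
    have h3 : |B| ≤ ε + (1 / ε) * B ^ 2 := by
      rw [← sub_nonneg, ← sq_abs]
      have : ε + (1 / ε) * |B| ^ 2 - |B| = ((|B| - ε) ^ 2 + |B| * ε) / ε := by
        field_simp; ring
      rw [this]; positivity
    have h4 := abs_sub B ((1 / (n : ℝ)) * ∑ i, (ceq ρ n i x - 1))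
    linarith
  refine hstep.trans ?_
  rw [cw_integral hb, cw_integral hb]
  simp_rw [mul_assoc _ (zeta _ _ _) _, hw]
  obtain ⟨w, hwd⟩ : ∃ w : (Fin n → ℝ) → ℝ, w = fun x =>
    Real.exp (n * Phi a (s * r) (2 * k) ((∑ l, x l) / n)) := ⟨_, rfl⟩
  have hwc : Continuous w := by
    have := Phi_continuous a (s * r) (2 * k)
    rw [hwd]; fun_prop
  have hwx : ∀ x : Fin n → ℝ, Real.exp (n * Phi a (s * r) (2 * k) ((∑ l, x l) / n)) = w x := by
    intro x; rw [hwd]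
  simp_rw [hwx] at hB' hU' ⊢
  have hexp : ∫ x, (ε + (1 / ε) * ((1 / (n : ℝ)) * ∑ i, ((x i) ^ 2 - 1)) ^ 2 +
        C1 * (((∑ l, x l) / n) ^ 2 + ε)) * w x ∂(Measure.pi fun _ : Fin n => ρ) =
      (ε + C1 * ε) * (∫ x, w x ∂(Measure.pi fun _ : Fin n => ρ)) +
      (1 / ε) * (∫ x, ((1 / (n : ℝ)) * ∑ i, ((x i) ^ 2 - 1)) ^ 2 * w x
        ∂(Measure.pi fun _ : Fin n => ρ)) +
      C1 * (∫ x, ((∑ l, x l) / n) ^ 2 * w x ∂(Measure.pi fun _ : Fin n => ρ)) := by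
    rw [← integral_const_mul, ← integral_const_mul, ← integral_const_mul,
      ← integral_add (aux_intn hb (by fun_prop)) (aux_intn hb (by fun_prop)),
      ← integral_add (aux_intn hb (by fun_prop)) (aux_intn hb (by fun_prop))]
    congr 1
    ext x
    ring
  rw [hexp]
  have hZ : 0 ≤ (cwZ ρ n)⁻¹ := (inv_pos.2 (cwZ_pos hb n)).le
  obtain ⟨I, hI⟩ : ∃ I, I = ∫ x, w x ∂(Measure.pi fun _ : Fin n => ρ) := ⟨_, rfl⟩
  rw [← hI] at hB' hU' ⊢
  have hfac : (n : ℝ) ^ (-(1 : ℝ) / (k : ℝ)) * (1 + |s| ^ 2) = ε := by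
    rw [hr2, sq_abs, hεd]; ring
  have hrhs : (1 + CB + C1 * (CU + 1)) * (n : ℝ) ^ (-(1 : ℝ) / (k : ℝ)) * (1 + |s| ^ 2) *
      ((cwZ ρ n)⁻¹ * I) = (cwZ ρ n)⁻¹ * ((1 + CB + C1 * (CU + 1)) * ε * I) := by
    rw [← hfac]; ring
  rw [hrhs]
  apply mul_le_mul_of_nonneg_left _ hZ
  have h1 := mul_le_mul_of_nonneg_left hB' (by positivity : 0 ≤ 1 / ε)
  have h2 : 1 / ε * (CB * ε ^ 2 * I) = CB * ε * I := by field_simp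
  have h3 := mul_le_mul_of_nonneg_left hU' hC1.le
  rw [h2] at h1
  calc _ ≤ (ε + C1 * ε) * I + CB * ε * I + C1 * (CU * ε * I) := by linarith
    _ = _ := by ring
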